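/- arXiv:1101.2833 — 6 statements merged into one kernel-verified Lean document; each statement's English description precedes it below -/
import Mathlib

section
/- Let n ≥ 1, let Ω ⊂ ℝⁿ be a domain (bounded connected open set), let x̄ ∈ Ω, let F ∈ C⁰(Ω × ℝ × ℝⁿ × S^{n×n}) and let f ∈ USC(Ω). Assume u ∈ LSC(Ω) with inf_Ω u > −∞ is lowerconical at x̄ and satisfies F(x, u, ∇u, ∇²u) ≤ f(x) in Ω ∖ {x̄} in the viscosity sense. Then F(x, u, ∇u, ∇²u) ≤ f(x) in all of Ω in the viscosity sense. -/
open Set Metric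

noncomputable section

/-- ℝⁿ, realized as Euclidean space on `Fin n`. -/
abbrev En (n : ℕ) := EuclideanSpace ℝ (Fin n)

/-- The Hessian matrix `∇²φ(x)` of a real-valued function on ℝⁿ. -/
noncomputable def hess {n : ℕ} (φ : En n → ℝ) (x : En n) : Matrix (Fin n) (Fin n) ℝ :=
  Matrix.of fun i j =>
    iteratedFDeriv ℝ 2 φ x ![EuclideanSpace.single i 1, EuclideanSpace.single j 1]

/-- `u` satisfies `F(x, u, ∇u, ∇²u) ≤ f(x)` in the open set `O` in the viscosity sense:
for every test function `φ ∈ C²(O)` and every `x₀ ∈ O` at which `u - φ` attains a local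
minimum with `u x₀ = φ x₀`, one has `F(x₀, φ(x₀), ∇φ(x₀), ∇²φ(x₀)) ≤ f(x₀)`. -/
def IsViscositySupersolution {n : ℕ}
    (F : En n → ℝ → En n → Matrix (Fin n) (Fin n) ℝ → ℝ)
    (f : En n → ℝ) (O : Set (En n)) (u : En n → ℝ) : Prop :=
  ∀ φ : En n → ℝ, ContDiffOn ℝ 2 φ O → ∀ x₀ ∈ O, u x₀ = φ x₀ →
    IsLocalMinOn (fun x => u x - φ x) O x₀ →
    F x₀ (φ x₀) (gradient φ x₀) (hess φ x₀) ≤ f x₀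

/-- `u` is lowerconical at the point `xb ∈ Ω`: for every `η ∈ C^∞(Ω)` and every `ε > 0`,
`inf_{x ∈ Ω} ((u+η)(x) - (u+η)(xb) - ε‖x - xb‖) < 0`. -/
def LowerConicalAt {n : ℕ} (Ω : Set (En n)) (u : En n → ℝ) (xb : En n) : Prop :=
  ∀ η : En n → ℝ, ContDiffOn ℝ (⊤ : ℕ∞) η Ω → ∀ ε > 0,
    ∃ x ∈ Ω, (u x + η x) - (u xb + η xb) - ε * ‖x - xb‖ < 0


open Filter Topology

theorem exists_below {n : ℕ} (Ω : Set (En n)) (xb : En n)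
    (u : En n → ℝ) (hubd : BddBelow (u '' Ω)) (hcone : LowerConicalAt Ω u xb)
    (φ : En n → ℝ) (hd : DifferentiableAt ℝ φ xb) (hφ : u xb = φ xb)
    (t ε r : ℝ) (ht : 0 < t) (hε : 0 < ε) (hr : 0 < r) :
    ∃ x ∈ closedBall xb r, ∃ p : En n, ‖p‖ ≤ ε ∧
      u x < φ x - t * ‖x - xb‖ ^ 2 + inner ℝ p (x - xb) := by
  by_contra! hcon
  obtain ⟨m, hm⟩ := hubd
  have hm' : ∀ x ∈ Ω, m ≤ u x := fun x hx => hm ⟨x, hx, rfl⟩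
  set L := fderiv ℝ φ xb with hL
  have h1 := hd.hasFDerivAt.isLittleO.def (half_pos hε)
  obtain ⟨r1, hr1, h2⟩ := Metric.eventually_nhds_iff.1 h1
  set ρ := min r r1 with hρ
  have hρ0 : 0 < ρ := lt_min hr hr1
  set K := ‖L‖ + ε / 2 with hK
  have hK0 : 0 < K := by positivity
  set M := t + |m - u xb| / ρ ^ 2 + K / ρ with hM
  have hMt : t ≤ M := by
    have : 0 ≤ |m - u xb| / ρ ^ 2 + K / ρ := by positivity
    linarith
  obtain ⟨x, hx, hlt⟩ := hcone (fun x => - L (x - xb) + M * ‖x - xb‖ ^ 2) (by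
    apply ContDiff.contDiffOn
    have : ContDiff ℝ (⊤ : ℕ∞) (fun x : En n => ‖x - xb‖ ^ 2) :=
      (contDiff_id.sub contDiff_const).norm_sq ℝ
    exact ((L.contDiff.comp (contDiff_id.sub contDiff_const)).neg).add (contDiff_const.mul this))
    (ε / 2) (half_pos hε)
  simp only [sub_self, map_zero, neg_zero, norm_zero, ne_eq, OfNat.ofNat_ne_zero,
    not_false_eq_true, zero_pow, mul_zero, add_zero] at hlt
  have hs0 := norm_nonneg (x - xb)
  by_cases hxρ : ‖x - xb‖ < ρ
  · have h3 := h2 (y := x) (by rw [dist_eq_norm]; exact hxρ.trans_le (min_le_right _ _))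
    rw [Real.norm_eq_abs] at h3
    have h4 := (abs_le.1 h3).1
    have h5 : u x ≥ φ x - t * ‖x - xb‖ ^ 2 + ε * ‖x - xb‖ := by
      by_cases hz : x - xb = 0
      · have : x = xb := sub_eq_zero.1 hz
        subst this
        simp [hφ]
      · have h6 := hcon x (by
          rw [mem_closedBall, dist_eq_norm]; exact (hxρ.trans_le (min_le_left _ _)).le)
          ((ε / ‖x - xb‖) • (x - xb)) (by
            have : ‖x - xb‖ ≠ 0 := norm_ne_zero_iff.2 hz
            rw [norm_smul, Real.norm_eq_abs, abs_of_nonneg (by positivity)]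
            field_simp
            exact le_refl _)
        have : ‖x - xb‖ ≠ 0 := norm_ne_zero_iff.2 hz
        rw [real_inner_smul_left, real_inner_self_eq_norm_sq] at h6
        have h7 : ε / ‖x - xb‖ * ‖x - xb‖ ^ 2 = ε * ‖x - xb‖ := by field_simp
        linarith
    have h8 : t * ‖x - xb‖ ^ 2 ≤ M * ‖x - xb‖ ^ 2 := by gcongr
    simp only [hL] at hlt
    linarith
  · push Not at hxρ
    have h3 := hm' x hx
    have h4 : L (x - xb) ≤ ‖L‖ * ‖x - xb‖ := (le_abs_self _).trans (L.le_opNorm _)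
    set s := ‖x - xb‖ with hs
    have h5 : K * s ≤ K / ρ * s ^ 2 := by
      have : K / ρ * s ^ 2 = K * s * (s / ρ) := by field_simp
      rw [this]
      exact le_mul_of_one_le_right (by positivity) ((one_le_div hρ0).2 hxρ)
    have h6 : |m - u xb| ≤ |m - u xb| / ρ ^ 2 * s ^ 2 := by
      have : |m - u xb| / ρ ^ 2 * s ^ 2 = |m - u xb| * (s / ρ) ^ 2 := by field_simp
      rw [this]
      exact le_mul_of_one_le_right (by positivity) (one_le_pow₀ ((one_le_div hρ0).2 hxρ))
    have h7 : 0 ≤ t * s ^ 2 := by positivity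
    have h8 : M * s ^ 2 = t * s ^ 2 + |m - u xb| / ρ ^ 2 * s ^ 2 + K / ρ * s ^ 2 := by
      rw [hM]; ring
    have h9 := neg_abs_le (m - u xb)
    have h10 : K * s = ‖L‖ * s + ε / 2 * s := by rw [hK]; ring
    linarith

theorem contDiff_nsq {n : ℕ} (xb : En n) : ContDiff ℝ 2 (fun x : En n => ‖x - xb‖ ^ 2) :=
  (contDiff_id.sub contDiff_const).norm_sq ℝ

theorem contDiff_lin {n : ℕ} (p xb : En n) (c : ℝ) :
    ContDiff ℝ 2 (fun x : En n => inner ℝ p (x - xb) + c) :=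
  (contDiff_const.inner ℝ (contDiff_id.sub contDiff_const)).add contDiff_const

theorem exists_touch {n : ℕ} (Ω : Set (En n))
    (hΩopen : IsOpen Ω) (xb : En n) (hxb : xb ∈ Ω)
    (u : En n → ℝ) (hu : LowerSemicontinuousOn u Ω) (hubd : BddBelow (u '' Ω))
    (hcone : LowerConicalAt Ω u xb)
    (φ : En n → ℝ) (hc : ContDiffOn ℝ 2 φ Ω) (hφ : u xb = φ xb)
    (hmin : IsLocalMinOn (fun x => u x - φ x) Ω xb) (t : ℝ) (ht : 0 < t) :
    ∃ x ∈ Ω \ {xb}, ∃ p : En n, ∃ c : ℝ, ‖x - xb‖ ≤ t ∧ ‖p‖ ≤ t ∧ |c| ≤ t * t ∧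
      u x = φ x - t * ‖x - xb‖ ^ 2 + (inner ℝ p (x - xb) + c) ∧
      IsLocalMinOn (fun y => u y - (φ y - t * ‖y - xb‖ ^ 2 + (inner ℝ p (y - xb) + c)))
        (Ω \ {xb}) x := by
  have hmin' : ∀ᶠ x in 𝓝 xb, x ∈ Ω ∧ u xb - φ xb ≤ u x - φ x := by
    have : IsLocalMin (fun x => u x - φ x) xb := hmin.isLocalMin (hΩopen.mem_nhds hxb)
    have hm : ∀ᶠ x in 𝓝 xb, x ∈ Ω := hΩopen.mem_nhds hxb
    exact hm.and this
  obtain ⟨r, hr, hball⟩ := Metric.nhds_basis_closedBall.eventually_iff.1 hmin'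
  have hsub : closedBall xb r ⊆ Ω := fun x hx => (hball hx).1
  obtain ⟨ε, hε, hε1, hε2, hε3⟩ : ∃ ε : ℝ, 0 < ε ∧ ε ≤ t ∧ ε ≤ t * t ∧ ε ≤ t * (r / 2) :=
    ⟨min t (min (t * t) (t * (r / 2))), by positivity, by simp, by simp, by simp⟩
  have hd : DifferentiableAt ℝ φ xb :=
    (hc.contDiffAt (hΩopen.mem_nhds hxb)).differentiableAt (by norm_num)
  obtain ⟨x1, hx1, p, hp, hlt⟩ :=
    exists_below Ω xb u hubd hcone φ hd hφ t ε r ht hε hr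
  set g : En n → ℝ := fun y => φ y - t * ‖y - xb‖ ^ 2 + inner ℝ p (y - xb) with hg
  have hgc : ContinuousOn g (closedBall xb r) := by
    have := hc.continuousOn.mono hsub
    fun_prop
  have hlsc : LowerSemicontinuousOn (fun y => u y + - g y) (closedBall xb r) :=
    (hu.mono hsub).add hgc.neg.lowerSemicontinuousOn
  obtain ⟨x, hx, hxmin⟩ := hlsc.exists_isMinOn ⟨x1, hx1⟩ (isCompact_closedBall xb r)
  rw [isMinOn_iff] at hxmin
  have hneg : u x + - g x < 0 := by
    have := hxmin x1 hx1
    have h' : u x1 < g x1 := hlt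
    linarith
  have hge := (hball hx).2
  have hin : inner ℝ p (x - xb) ≤ ε * ‖x - xb‖ :=
    (real_inner_le_norm _ _).trans (by gcongr)
  have hgx : g x = φ x - t * ‖x - xb‖ ^ 2 + inner ℝ p (x - xb) := rfl
  have hs0 := norm_nonneg (x - xb)
  have hts : 0 ≤ t * ‖x - xb‖ ^ 2 := by positivity
  have hspos : 0 < ‖x - xb‖ := by
    rcases hs0.eq_or_lt with h | h
    · rw [← h] at hin hgx
      nlinarith
    · exact h
  have hsε : t * ‖x - xb‖ < ε := by
    by_contra! h
    have := mul_le_mul_of_nonneg_right h hs0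
    nlinarith
  have hst : ‖x - xb‖ < t := lt_of_mul_lt_mul_left (hsε.trans_le hε2) ht.le
  have hsr : ‖x - xb‖ < r / 2 := lt_of_mul_lt_mul_left (hsε.trans_le hε3) ht.le
  refine ⟨x, ⟨hsub hx, ?_⟩, p, u x + - g x, hst.le, hp.trans hε1, ?_, ?_, ?_⟩
  · intro h
    rw [mem_singleton_iff.1 h] at hspos
    simp at hspos
  · have : ε * ‖x - xb‖ ≤ t * t := by gcongr
    rw [abs_le]
    constructor <;> nlinarith
  · rw [hgx]; ring
  · apply IsLocalMin.on
    have hnb : closedBall xb r ∈ 𝓝 x := by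
      apply mem_of_superset (isOpen_ball.mem_nhds (x := x) _) ball_subset_closedBall
      rw [mem_ball, dist_eq_norm]; linarith
    filter_upwards [hnb] with y hy
    have h1 := hxmin y hy
    have hgy : g y = φ y - t * ‖y - xb‖ ^ 2 + inner ℝ p (y - xb) := rfl
    linarith

theorem fderiv_pert {n : ℕ} (φ : En n → ℝ) (x xb p : En n) (t c : ℝ)
    (h : DifferentiableAt ℝ φ x) :
    fderiv ℝ (fun y => φ y - t * ‖y - xb‖ ^ 2 + (inner ℝ p (y - xb) + c)) x =
      fderiv ℝ φ x - t • fderiv ℝ (fun y => ‖y - xb‖ ^ 2) x + innerSL ℝ p := by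
  have h1 : HasFDerivAt (fun y : En n => ‖y - xb‖ ^ 2) _ x :=
    ((contDiff_nsq xb).differentiable (by norm_num) x).hasFDerivAt
  have h2 : HasFDerivAt (fun y : En n => inner ℝ p (y - xb) + c) (innerSL ℝ p) x := by
    have := ((innerSL ℝ p).hasFDerivAt.comp x ((hasFDerivAt_id x).sub_const xb)).add_const c
    simpa using this
  exact ((h.hasFDerivAt.sub (h1.const_mul t)).add h2).fderiv

theorem gradient_pert {n : ℕ} (φ : En n → ℝ) (x xb p : En n) (t c : ℝ)
    (h : DifferentiableAt ℝ φ x) :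
    gradient (fun y => φ y - t * ‖y - xb‖ ^ 2 + (inner ℝ p (y - xb) + c)) x =
      gradient φ x - t • gradient (fun y => ‖y - xb‖ ^ 2) x + p := by
  simp only [gradient]
  rw [fderiv_pert φ x xb p t c h, map_add, map_sub]
  congr 1
  · congr 1
    simp
  · rw [LinearIsometryEquiv.symm_apply_eq]
    ext y
    simp

theorem hess_pert {n : ℕ} (φ : En n → ℝ) (x xb p : En n) (t c : ℝ)
    (h : ContDiffAt ℝ 2 φ x) :
    hess (fun y => φ y - t * ‖y - xb‖ ^ 2 + (inner ℝ p (y - xb) + c)) x =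
      hess φ x - t • hess (fun y => ‖y - xb‖ ^ 2) x := by
  have hev : ∀ᶠ y in nhds x, ContDiffAt ℝ 2 φ y := h.eventually (by simp)
  have h1 : fderiv ℝ (fun y => φ y - t * ‖y - xb‖ ^ 2 + (inner ℝ p (y - xb) + c)) =ᶠ[nhds x]
      fun z => fderiv ℝ φ z - t • fderiv ℝ (fun y => ‖y - xb‖ ^ 2) z + innerSL ℝ p := by
    filter_upwards [hev] with y hy
    exact fderiv_pert φ y xb p t c (hy.differentiableAt (by norm_num))
  have h2 : HasFDerivAt (fderiv ℝ φ) _ x :=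
    ((h.fderiv_right (m := 1) (by norm_num)).differentiableAt (by norm_num)).hasFDerivAt
  have h3 : HasFDerivAt (fderiv ℝ (fun y : En n => ‖y - xb‖ ^ 2)) _ x :=
    (((contDiff_nsq xb).contDiffAt.fderiv_right (m := 1)
      (by norm_num)).differentiableAt (by norm_num)).hasFDerivAt
  have h4 := ((h2.sub (h3.const_smul t)).add_const (innerSL ℝ p)).fderiv
  ext i j
  simp only [hess, Matrix.of_apply, Matrix.sub_apply, Matrix.smul_apply, iteratedFDeriv_two_apply]
  rw [h1.fderiv_eq]
  erw [h4]
  simp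

theorem continuousAt_gradient {n : ℕ} (φ : En n → ℝ) (x : En n) (h : ContDiffAt ℝ 2 φ x) :
    ContinuousAt (gradient φ) x :=
  (InnerProductSpace.toDual ℝ (En n)).symm.continuous.continuousAt.comp
    (h.fderiv_right (m := 1) (by norm_num)).continuousAt

theorem continuousAt_hess {n : ℕ} (φ : En n → ℝ) (x : En n) (h : ContDiffAt ℝ 2 φ x) :
    ContinuousAt (hess φ) x := by
  have h2 := (h.iteratedFDeriv_right (m := 0) (i := 2) (by norm_num)).continuousAt
  refine continuousAt_pi.2 fun i => continuousAt_pi.2 fun j => ?_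
  exact ((ContinuousMultilinearMap.apply ℝ (fun _ : Fin 2 => En n) ℝ
    ![EuclideanSpace.single i 1, EuclideanSpace.single j 1]).continuous.continuousAt).comp h2


/-- **Theorem 1.1.** A viscosity supersolution on `Ω \ {xb}` which is lowerconical at `xb`
is a viscosity supersolution on all of `Ω`. -/
theorem removable_point_singularity
    {n : ℕ} (hn : 1 ≤ n) (Ω : Set (En n))
    (hΩopen : IsOpen Ω) (hΩconn : IsConnected Ω) (hΩbdd : Bornology.IsBounded Ω)
    (xb : En n) (hxb : xb ∈ Ω)
    (F : En n → ℝ → En n → Matrix (Fin n) (Fin n) ℝ → ℝ)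
    (hFcont : ContinuousOn
      (fun q : En n × ℝ × En n × Matrix (Fin n) (Fin n) ℝ => F q.1 q.2.1 q.2.2.1 q.2.2.2)
      {q | q.1 ∈ Ω})
    (f : En n → ℝ) (hf : UpperSemicontinuousOn f Ω)
    (u : En n → ℝ) (hu : LowerSemicontinuousOn u Ω) (hubd : BddBelow (u '' Ω))
    (hcone : LowerConicalAt Ω u xb)
    (hvisc : IsViscositySupersolution F f (Ω \ {xb}) u) :
    IsViscositySupersolution F f Ω u := by

  intro φ hc x₀ hx₀ hφ hmin
  by_cases hne : x₀ = xb
  swap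
  · refine hvisc φ (hc.mono sdiff_subset) x₀ ⟨hx₀, hne⟩ hφ ?_
    exact hmin.on_subset sdiff_subset
  subst hne
  have hcA : ∀ x ∈ Ω, ContDiffAt ℝ 2 φ x := fun x hx => hc.contDiffAt (hΩopen.mem_nhds hx)
  choose! x hx p c hxt hpt hct hux hlm using
    exists_touch Ω hΩopen x₀ hx₀ u hu hubd hcone φ hc hφ hmin
  have key : ∀ t : ℝ, 0 < t → F (x t)
      (φ (x t) - t * ‖x t - x₀‖ ^ 2 + (inner ℝ (p t) (x t - x₀) + c t))
      (gradient φ (x t) - t • gradient (fun y => ‖y - x₀‖ ^ 2) (x t) + p t)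
      (hess φ (x t) - t • hess (fun y => ‖y - x₀‖ ^ 2) (x t)) ≤ f (x t) := by
    intro t ht
    have hA := hcA _ (hx t ht).1
    have := hvisc (fun y => φ y - t * ‖y - x₀‖ ^ 2 + (inner ℝ (p t) (y - x₀) + c t))
      (((hc.mono sdiff_subset).sub (contDiff_const.mul (contDiff_nsq x₀)).contDiffOn).add
        (contDiff_lin (p t) x₀ (c t)).contDiffOn) (x t) (hx t ht) (hux t ht) (hlm t ht)
    rwa [gradient_pert _ _ _ _ _ _ (hA.differentiableAt (by norm_num)),
      hess_pert _ _ _ _ _ _ hA] at this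
  have ht0 : Tendsto (fun t : ℝ => t) (𝓝[>] 0) (𝓝 0) := nhdsWithin_le_nhds
  have hpos : ∀ᶠ t : ℝ in 𝓝[>] 0, 0 < t := self_mem_nhdsWithin
  have tx : Tendsto x (𝓝[>] 0) (𝓝 x₀) := by
    rw [tendsto_iff_norm_sub_tendsto_zero]
    exact squeeze_zero' (Eventually.of_forall fun _ => norm_nonneg _)
      (hpos.mono fun t ht => hxt t ht) ht0
  have tp : Tendsto p (𝓝[>] 0) (𝓝 0) := by
    rw [tendsto_zero_iff_norm_tendsto_zero]
    exact squeeze_zero' (Eventually.of_forall fun _ => norm_nonneg _)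
      (hpos.mono fun t ht => hpt t ht) ht0
  have tc : Tendsto c (𝓝[>] 0) (𝓝 0) := by
    rw [tendsto_zero_iff_norm_tendsto_zero]
    exact squeeze_zero' (Eventually.of_forall fun _ => norm_nonneg _)
      (hpos.mono fun t ht => hct t ht) (by simpa using ht0.mul ht0)
  have hA := hcA x₀ hx₀
  have ts : Tendsto (fun t => x t - x₀) (𝓝[>] 0) (𝓝 0) := by
    simpa using tx.sub_const x₀
  have t1 : Tendsto (fun t => φ (x t) - t * ‖x t - x₀‖ ^ 2 + (inner ℝ (p t) (x t - x₀) + c t))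
      (𝓝[>] 0) (𝓝 (φ x₀)) := by
    have := ((hA.continuousAt.tendsto.comp tx).sub (ht0.mul (ts.norm.pow 2))).add
      ((tp.inner ts).add tc)
    simpa using this
  have t2 : Tendsto (fun t => gradient φ (x t) - t • gradient (fun y => ‖y - x₀‖ ^ 2) (x t) + p t)
      (𝓝[>] 0) (𝓝 (gradient φ x₀)) := by
    have := (((continuousAt_gradient φ x₀ hA).tendsto.comp tx).sub (ht0.smul
      ((continuousAt_gradient _ x₀ (contDiff_nsq x₀).contDiffAt).tendsto.comp tx))).add tp
    simpa using this
  have t3 : Tendsto (fun t => hess φ (x t) - t • hess (fun y => ‖y - x₀‖ ^ 2) (x t))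
      (𝓝[>] 0) (𝓝 (hess φ x₀)) := by
    have := ((continuousAt_hess φ x₀ hA).tendsto.comp tx).sub (ht0.smul
      ((continuousAt_hess _ x₀ (contDiff_nsq x₀).contDiffAt).tendsto.comp tx))
    simpa using this
  have tF := (hFcont (x₀, φ x₀, gradient φ x₀, hess φ x₀) hx₀).tendsto.comp
    (tendsto_nhdsWithin_iff.2 ⟨tx.prodMk_nhds (t1.prodMk_nhds (t2.prodMk_nhds t3)),
      hpos.mono fun t ht => (hx t ht).1⟩)
  by_contra! hcon
  obtain ⟨a, ha1, ha2⟩ := exists_between hcon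
  have e1 := tF.eventually (lt_mem_nhds ha2)
  have e2 := (tendsto_nhdsWithin_iff.2 ⟨tx, hpos.mono fun t ht => (hx t ht).1⟩).eventually
    (hf x₀ hx₀ a ha1)
  obtain ⟨t, h1, h2, h3⟩ := (e1.and (e2.and hpos)).exists
  exact absurd (key t h3) (not_le.2 (h2.trans h1))
end
end

section
/- Let Ω ⊂ ℝⁿ be a domain (bounded connected open set), F ∈ C⁰(Ω × ℝ × ℝⁿ × S^{n×n}), and suppose that for every β > 0, limsup_{a→∞} inf{ F(x, s, p, aI) : x ∈ Ω, |(s,p)| ≤ β } = ∞. Let f : Ω → ℝ satisfy sup_Ω f < ∞. If u ∈ LSC(Ω) satisfies inf_Ω u > −∞ and F(x, u, ∇u, ∇²u) ≤ f(x) in Ω in the viscosity sense, then u is lowerconical at every point of Ω. -/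
open Set Metric

noncomputable section

/-- The quadratic test function. -/
lemma quad_hasFDerivAt {n : ℕ} (c a : ℝ) (p xb y : En n) :
    HasFDerivAt (fun x : En n => c + inner ℝ p (x - xb) + a / 2 * ‖x - xb‖ ^ 2)
      (innerSL ℝ p + a • innerSL ℝ (y - xb)) y := by
  have h0 : HasFDerivAt (fun x : En n => x - xb) (ContinuousLinearMap.id ℝ (En n)) y :=
    (hasFDerivAt_id y).sub_const xb
  have h1 : HasFDerivAt (fun x : En n => inner ℝ p (x - xb)) (innerSL ℝ p) y := by
    have := ((innerSL ℝ p).hasFDerivAt (x := y - xb)).comp y h0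
    exact this.congr_fderiv (by ext v; simp)
  have h2 := (h0.norm_sq).const_mul (a / 2)
  refine ((h1.const_add c).add h2).congr_fderiv ?_
  ext v
  simp
  ring

lemma quad_hess {n : ℕ} (c a : ℝ) (p xb : En n) :
    hess (fun x : En n => c + inner ℝ p (x - xb) + a / 2 * ‖x - xb‖ ^ 2) xb
      = a • (1 : Matrix (Fin n) (Fin n) ℝ) := by
  have h : fderiv ℝ (fun x : En n => c + inner ℝ p (x - xb) + a / 2 * ‖x - xb‖ ^ 2)
      = fun y => innerSL ℝ p + a • innerSL ℝ (y - xb) := by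
    funext y
    exact (quad_hasFDerivAt c a p xb y).fderiv
  have h2 : HasFDerivAt (fun y : En n => innerSL ℝ p + a • innerSL ℝ (y - xb))
      (a • (innerSL ℝ : En n →L[ℝ] En n →L[ℝ] ℝ)) xb := by
    have h0 : HasFDerivAt (fun x : En n => x - xb) (ContinuousLinearMap.id ℝ (En n)) xb :=
      (hasFDerivAt_id xb).sub_const xb
    have h3 : HasFDerivAt (fun x : En n => (innerSL ℝ : En n →L[ℝ] En n →L[ℝ] ℝ) (x - xb))
        (innerSL ℝ : En n →L[ℝ] En n →L[ℝ] ℝ) xb :=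
      HasFDerivAt.comp (g := fun z : En n => (innerSL ℝ : En n →L[ℝ] En n →L[ℝ] ℝ) z)
        (f := fun x : En n => x - xb) xb
        ((innerSL ℝ : En n →L[ℝ] En n →L[ℝ] ℝ).hasFDerivAt) h0
    exact (h3.const_smul a).const_add (innerSL ℝ p)
  ext i j
  simp only [hess, Matrix.of_apply, iteratedFDeriv_two_apply, h]
  rw [h2.fderiv]
  have h4 : ((innerSL ℝ : En n →L[ℝ] En n →L[ℝ] ℝ) (EuclideanSpace.single i 1))
      (EuclideanSpace.single j 1) = if i = j then (1 : ℝ) else 0 := by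
    rw [innerSL_apply_apply]
    simp [EuclideanSpace.inner_single_left, Pi.single_apply]
  have h5 : ((a • (innerSL ℝ : En n →L[ℝ] En n →L[ℝ] ℝ)) (EuclideanSpace.single i 1))
      (EuclideanSpace.single j 1) = a * if i = j then (1 : ℝ) else 0 := by
    rw [← h4]; rfl
  refine Eq.trans h5 ?_
  simp [Matrix.one_apply]

lemma quad_gradient {n : ℕ} (c a : ℝ) (p xb : En n) :
    gradient (fun x : En n => c + inner ℝ p (x - xb) + a / 2 * ‖x - xb‖ ^ 2) xb = p := by
  apply HasGradientAt.gradient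
  rw [hasGradientAt_iff_hasFDerivAt]
  refine (quad_hasFDerivAt c a p xb xb).congr_fderiv ?_
  ext v
  simp

/-- **Remark 1.2.** If `F` satisfies
`limsup_{a → ∞} inf {F(x,s,p,aI) : x ∈ Ω, |(s,p)| ≤ β} = ∞` for every `β > 0`, and
`sup_Ω f < ∞`, then every bounded-below viscosity supersolution `u` of
`F(x,u,∇u,∇²u) ≤ f` in `Ω` is lowerconical at every point of `Ω`. -/
theorem supersolution_is_lowerconical
    {n : ℕ} (Ω : Set (En n))
    (hΩopen : IsOpen Ω) (hΩconn : IsConnected Ω) (hΩbdd : Bornology.IsBounded Ω)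
    (F : En n → ℝ → En n → Matrix (Fin n) (Fin n) ℝ → ℝ)
    (hFcont : ContinuousOn
      (fun q : En n × ℝ × En n × Matrix (Fin n) (Fin n) ℝ => F q.1 q.2.1 q.2.2.1 q.2.2.2)
      {q | q.1 ∈ Ω})
    (hFlim : ∀ β > (0 : ℝ), ∀ K A : ℝ, ∃ a : ℝ, A ≤ a ∧
      ∀ x ∈ Ω, ∀ (s : ℝ) (p : En n), |s| ≤ β → ‖p‖ ≤ β →
        K ≤ F x s p (a • (1 : Matrix (Fin n) (Fin n) ℝ)))
    (f : En n → ℝ) (hfbd : BddAbove (f '' Ω))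
    (u : En n → ℝ) (hu : LowerSemicontinuousOn u Ω) (hubd : BddBelow (u '' Ω))
    (hvisc : IsViscositySupersolution F f Ω u) :
    ∀ xb ∈ Ω, LowerConicalAt Ω u xb := by
  intro xb hxb η hη ε hε
  by_contra hcon
  push Not at hcon
  obtain ⟨M, hM⟩ := hfbd
  have hηd : DifferentiableAt ℝ η xb :=
    (hη.contDiffAt (hΩopen.mem_nhds hxb)).differentiableAt (by simp)
  have hg := hηd.hasGradientAt
  set g := gradient η xb with hgdef
  rw [hasGradientAt_iff_hasFDerivAt] at hg
  have hlo := hg.isLittleO.def (half_pos hε)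
  obtain ⟨a, ha, hF⟩ := hFlim (max 1 (max |u xb| ‖-g‖)) (by positivity) (M + 1) 1
  have h1 := hF xb hxb (u xb) (-g) (by simp) (by simp)
  have hv := hvisc (fun x : En n => u xb + inner ℝ (-g) (x - xb) + a / 2 * ‖x - xb‖ ^ 2)
    (((contDiff_const.add (contDiff_const.inner ℝ (contDiff_id.sub contDiff_const))).add
      (contDiff_const.mul ((contDiff_id.sub contDiff_const).norm_sq ℝ))).contDiffOn) xb hxb (by simp) ?_
  · rw [quad_gradient, quad_hess] at hv
    have h2 : f xb ≤ M := hM ⟨xb, hxb, rfl⟩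
    simp only [sub_self, inner_zero_right, norm_zero] at hv
    norm_num at hv
    linarith
  · have hball : ∀ᶠ x in nhds xb, ‖x - xb‖ < ε / a := by
      have := Metric.ball_mem_nhds xb (div_pos hε (by linarith : 0 < a))
      filter_upwards [this] with x hx
      simpa [dist_eq_norm] using hx
    have hall : ∀ᶠ x in nhdsWithin xb Ω, u xb - (u xb + inner ℝ (-g) (xb - xb)
        + a / 2 * ‖xb - xb‖ ^ 2) ≤ u x - (u xb + inner ℝ (-g) (x - xb) + a / 2 * ‖x - xb‖ ^ 2) := by
      filter_upwards [nhdsWithin_le_nhds hlo, nhdsWithin_le_nhds hball, self_mem_nhdsWithin]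
        with x hx1 hx2 hx3
      have h3 := hcon x hx3
      rw [InnerProductSpace.toDual_apply_apply, Real.norm_eq_abs] at hx1
      have h4 := (abs_le.1 hx1).2
      rw [lt_div_iff₀ (by linarith)] at hx2
      have h5 : a / 2 * ‖x - xb‖ ^ 2 ≤ ε / 2 * ‖x - xb‖ := by
        nlinarith [norm_nonneg (x - xb)]
      simp only [sub_self, inner_zero_right, norm_zero, inner_neg_left]
      linarith
    exact hall
end
end

section
/- Let n ≥ 1, let Ω ⊂ ℝⁿ be a domain (bounded connected open set), let F ∈ C⁰(Ω × ℝ × ℝⁿ × S^{n×n}) be degenerate elliptic, let a_ij, b_i, c ∈ L^∞(Ω) satisfy the uniform ellipticity and boundedness conditions with constants λ, Λ, and let f ∈ USC(Ω). Assume u ∈ LSC(Ω) satisfies, for some constant C, a_ij(x)∂_ij u + b_i(x)∂_i u + c(x)u ≤ C in Ω in the viscosity sense, and F(x, u, ∇u, ∇²u) ≤ f(x) in Ω ∖ E in the viscosity sense, where E ⊂ Ω has zero Lebesgue measure. Then F(x, u, ∇u, ∇²u) ≤ f(x) in all of Ω in the viscosity sense. -/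
open Set Metric

noncomputable section

/-- `F` is degenerate elliptic: `F(x,s,p,M+N) ≥ F(x,s,p,M)` for all arguments and all
positive definite symmetric `N`. -/
def DegenerateElliptic {n : ℕ} (Ω : Set (En n))
    (F : En n → ℝ → En n → Matrix (Fin n) (Fin n) ℝ → ℝ) : Prop :=
  ∀ x ∈ Ω, ∀ (s : ℝ) (p : En n) (M N : Matrix (Fin n) (Fin n) ℝ),
    N.PosDef → F x s p M ≤ F x s p (M + N)

/-- The linear operator `a_ij(x) ∂_ij u + b_i(x) ∂_i u + c(x) u`, written as a function of
`(x, s, p, M) = (x, u, ∇u, ∇²u)`. -/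
def linOp {n : ℕ} (a : En n → Matrix (Fin n) (Fin n) ℝ) (b : En n → En n) (c : En n → ℝ) :
    En n → ℝ → En n → Matrix (Fin n) (Fin n) ℝ → ℝ :=
  fun x s p M => (∑ i, ∑ j, a x i j * M i j) + (∑ i, b x i * p i) + c x * s

/-- The coefficients `a_ij, b_i, c` are bounded by `Lam` and uniformly elliptic with
constant `lam` on `Ω`. -/
def EllipticCoeffs {n : ℕ} (Ω : Set (En n)) (a : En n → Matrix (Fin n) (Fin n) ℝ)
    (b : En n → En n) (c : En n → ℝ) (lam Lam : ℝ) : Prop :=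
  (∀ x ∈ Ω, ∀ i j, |a x i j| + |b x i| + |c x| ≤ Lam) ∧
  (∀ x ∈ Ω, ∀ ξ : En n, lam * ‖ξ‖ ^ 2 ≤ ∑ i, ∑ j, a x i j * ξ i * ξ j)

def qd {n : ℕ} (c : ℝ) (g e y : En n) (α κ : ℝ) (x : En n) : ℝ :=
  c + inner ℝ g (x - y) + α * (inner ℝ e (x - y)) ^ 2 - κ * ‖x - y‖ ^ 2

lemma qd_contDiff {n : ℕ} (c : ℝ) (g e y : En n) (α κ : ℝ) :
    ContDiff ℝ 2 (qd c g e y α κ) := by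
  unfold qd
  have h : ContDiff ℝ 2 (fun x : En n => x - y) := contDiff_id.sub contDiff_const
  have h1 : ∀ v : En n, ContDiff ℝ 2 (fun x : En n => inner ℝ v (x - y)) :=
    fun v => contDiff_const.inner ℝ h
  exact ((contDiff_const.add (h1 g)).add (contDiff_const.mul ((h1 e).pow 2))).sub
    (contDiff_const.mul (h.norm_sq ℝ))

def qg {n : ℕ} (g e y : En n) (α κ : ℝ) (x : En n) : En n :=
  g + (2 * α * inner ℝ e (x - y)) • e - (2 * κ) • (x - y)

lemma qd_hasFDerivAt {n : ℕ} (c : ℝ) (g e y : En n) (α κ : ℝ) (x : En n) :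
    HasFDerivAt (qd c g e y α κ) (innerSL ℝ (qg g e y α κ x)) x := by
  unfold qd
  have h : HasFDerivAt (fun x : En n => x - y) (ContinuousLinearMap.id ℝ (En n)) x :=
    (hasFDerivAt_id x).sub_const y
  have h1 : ∀ v : En n, HasFDerivAt (fun x : En n => inner ℝ v (x - y)) (innerSL ℝ v) x := by
    intro v
    have := (innerSL ℝ v).hasFDerivAt.comp x h
    exact this
  have h2 := h.norm_sq
  have := (((h1 g).const_add c).add (((h1 e).pow 2).const_mul α)).sub (h2.const_mul κ)
  refine this.congr_fderiv ?_
  ext v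
  simp [qg, inner_add_left, inner_sub_left, inner_smul_left]
  ring

lemma qd_gradient {n : ℕ} (c : ℝ) (g e y : En n) (α κ : ℝ) (x : En n) :
    gradient (qd c g e y α κ) x = qg g e y α κ x := by
  apply HasGradientAt.gradient
  rw [hasGradientAt_iff_hasFDerivAt]
  refine (qd_hasFDerivAt c g e y α κ x).congr_fderiv ?_
  ext v
  simp

lemma qd_hess {n : ℕ} (c : ℝ) (g e y : En n) (α κ : ℝ) (x : En n) (i j : Fin n) :
    hess (qd c g e y α κ) x i j = 2 * α * e i * e j - 2 * κ * (if i = j then 1 else 0) := by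
  have hf : fderiv ℝ (qd c g e y α κ) = fun x => innerSL ℝ (qg g e y α κ x) := by
    funext x
    exact (qd_hasFDerivAt c g e y α κ x).fderiv
  have h : HasFDerivAt (fun x : En n => x - y) (ContinuousLinearMap.id ℝ (En n)) x :=
    (hasFDerivAt_id x).sub_const y
  have h1 : ∀ v : En n, HasFDerivAt (fun x : En n => inner ℝ v (x - y)) (innerSL ℝ v) x := by
    intro v
    have := (innerSL ℝ v).hasFDerivAt.comp x h
    exact this
  have h2 : HasFDerivAt (qg g e y α κ)
      (((2 * α) • innerSL ℝ e).smulRight e - (2 * κ) • ContinuousLinearMap.id ℝ (En n)) x := by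
    unfold qg
    have := ((((h1 e).const_mul (2 * α)).smul_const e).const_add g).sub (h.const_smul (2 * κ))
    exact this
  have h3 := (innerSL ℝ (E := En n)).hasFDerivAt.comp x h2
  have h4 := h3.fderiv
  have h5 : (innerSL ℝ (E := En n)) ∘ qg g e y α κ = fderiv ℝ (qd c g e y α κ) := by
    rw [hf]; rfl
  rw [h5] at h4
  simp only [hess, Matrix.of_apply]
  rw [iteratedFDeriv_two_apply, h4]
  change inner ℝ ((2 * α * inner ℝ e (EuclideanSpace.single i (1 : ℝ))) • e -
    (2 * κ) • EuclideanSpace.single i (1 : ℝ)) (EuclideanSpace.single j (1 : ℝ)) = _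
  simp only [EuclideanSpace.inner_single_right]
  by_cases hij : i = j
  · simp [hij]
  · simp [hij, Ne.symm hij]

lemma gradient_add_qd {n : ℕ} {ψ : En n → ℝ} {x : En n} (hψ : ContDiffAt ℝ 2 ψ x)
    (c : ℝ) (g e y : En n) (α κ : ℝ) :
    gradient (fun z => ψ z + qd c g e y α κ z) x = gradient ψ x + qg g e y α κ x := by
  rw [← qd_gradient c g e y α κ x]
  unfold gradient
  rw [fderiv_fun_add (hψ.differentiableAt (by norm_num))
    ((qd_contDiff c g e y α κ).contDiffAt.differentiableAt (by norm_num)), map_add]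

lemma hess_add_qd {n : ℕ} {ψ : En n → ℝ} {x : En n} (hψ : ContDiffAt ℝ 2 ψ x)
    (c : ℝ) (g e y : En n) (α κ : ℝ) (i j : Fin n) :
    hess (fun z => ψ z + qd c g e y α κ z) x i j =
      hess ψ x i j + (2 * α * e i * e j - 2 * κ * (if i = j then 1 else 0)) := by
  rw [← qd_hess c g e y α κ x i j]
  simp only [hess, Matrix.of_apply]
  have := iteratedFDeriv_add_apply (i := 2) (f := ψ) (g := qd c g e y α κ) (x := x) hψ
    (qd_contDiff c g e y α κ).contDiffAt
  have h2 : (fun z => ψ z + qd c g e y α κ z) = ψ + qd c g e y α κ := rfl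
  rw [h2, this]; rfl

lemma gradient_contOn {n : ℕ} {ψ : En n → ℝ} {Ω : Set (En n)} (hΩ : IsOpen Ω)
    (hψ : ContDiffOn ℝ 2 ψ Ω) : ContinuousOn (gradient ψ) Ω := by
  unfold gradient
  exact (InnerProductSpace.toDual ℝ (En n)).symm.continuous.comp_continuousOn
    (hψ.continuousOn_fderiv_of_isOpen hΩ (by norm_num))

lemma hess_contOn {n : ℕ} {ψ : En n → ℝ} {Ω : Set (En n)} (hΩ : IsOpen Ω)
    (hψ : ContDiffOn ℝ 2 ψ Ω) : ContinuousOn (hess ψ) Ω := by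
  have h1 : ContinuousOn (iteratedFDeriv ℝ 2 ψ) Ω :=
    (hψ.continuousOn_iteratedFDerivWithin (m := 2) (by norm_num) hΩ.uniqueDiffOn).congr
      (fun x hx => (iteratedFDerivWithin_of_isOpen 2 hΩ hx).symm)
  refine continuousOn_pi.2 fun i => continuousOn_pi.2 fun j => ?_
  simp only [hess, Matrix.of_apply]
  exact (continuous_eval_const _).comp_continuousOn h1

lemma linOp_lower {n : ℕ} (hn : 1 ≤ n) {Ω : Set (En n)} {a : En n → Matrix (Fin n) (Fin n) ℝ}
    {b : En n → En n} {c : En n → ℝ} {lam Lam : ℝ} (hcoef : EllipticCoeffs Ω a b c lam Lam)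
    {x : En n} (hx : x ∈ Ω) {s : ℝ} {P e : En n} {H M : Matrix (Fin n) (Fin n) ℝ}
    {α κ B G S : ℝ} (hα : 0 ≤ α) (hκ : 0 ≤ κ) (he : ‖e‖ = 1)
    (hM : ∀ i j, M i j = H i j + (2 * α * e i * e j - 2 * κ * (if i = j then 1 else 0)))
    (hH : ∀ i j, |H i j| ≤ B) (hP : ∀ i, |P i| ≤ G) (hs : |s| ≤ S) :
    2 * α * lam - 2 * κ * (n * Lam) - n * (n * (Lam * B)) - n * (Lam * G) - Lam * S
      ≤ linOp a b c x s P M := by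
  obtain ⟨h1, h2⟩ := hcoef
  have ha : ∀ i j, |a x i j| ≤ Lam := fun i j => by
    have := h1 x hx i j; have := abs_nonneg (b x i); have := abs_nonneg (c x); linarith
  have hb : ∀ i, |b x i| ≤ Lam := fun i => by
    have := h1 x hx i i; have := abs_nonneg (a x i i); have := abs_nonneg (c x); linarith
  have hc : |c x| ≤ Lam := by
    have := h1 x hx ⟨0, hn⟩ ⟨0, hn⟩
    have := abs_nonneg (a x ⟨0, hn⟩ ⟨0, hn⟩); have := abs_nonneg (b x ⟨0, hn⟩); linarith
  have hL : 0 ≤ Lam := (abs_nonneg _).trans hc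
  have key : ∀ u v U V : ℝ, |u| ≤ U → |v| ≤ V → -(U * V) ≤ u * v := by
    intro u v U V hu hv
    have : |u * v| ≤ U * V := by
      rw [abs_mul]; exact mul_le_mul hu hv (abs_nonneg _) ((abs_nonneg _).trans hu)
    exact (abs_le.1 this).1
  have e1 : ∑ i, ∑ j, a x i j * M i j = (∑ i, ∑ j, a x i j * H i j)
      + 2 * α * (∑ i, ∑ j, a x i j * e i * e j) - 2 * κ * ∑ i, a x i i := by
    simp only [hM, Finset.mul_sum, ← Finset.sum_add_distrib, ← Finset.sum_sub_distrib]
    refine Finset.sum_congr rfl fun i _ => ?_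
    have : 2 * κ * a x i i = ∑ j, 2 * κ * a x i j * (if i = j then 1 else 0) := by simp
    rw [this, ← Finset.sum_sub_distrib]
    refine Finset.sum_congr rfl fun j _ => ?_
    ring
  have e2 : -(n * (n * (Lam * B))) ≤ ∑ i, ∑ j, a x i j * H i j := by
    have : ∑ i : Fin n, ∑ j : Fin n, -(Lam * B) ≤ ∑ i, ∑ j, a x i j * H i j :=
      Finset.sum_le_sum fun i _ => Finset.sum_le_sum fun j _ => key _ _ _ _ (ha i j) (hH i j)
    simpa using this
  have e3 : lam ≤ ∑ i, ∑ j, a x i j * e i * e j := by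
    have := h2 x hx e
    simpa [he] using this
  have e4 : ∑ i, a x i i ≤ n * Lam := by
    have : ∑ i, a x i i ≤ ∑ i : Fin n, Lam :=
      Finset.sum_le_sum fun i _ => (abs_le.1 (ha i i)).2
    simpa using this
  have e5 : -(n * (Lam * G)) ≤ ∑ i, b x i * P i := by
    have : ∑ i : Fin n, -(Lam * G) ≤ ∑ i, b x i * P i :=
      Finset.sum_le_sum fun i _ => key _ _ _ _ (hb i) (hP i)
    simpa using this
  have e6 := key _ _ _ _ hc hs
  have e7 := mul_le_mul_of_nonneg_left e3 (by positivity : 0 ≤ 2 * α)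
  have e8 := mul_le_mul_of_nonneg_left e4 (by positivity : 0 ≤ 2 * κ)
  unfold linOp
  rw [e1]
  linarith

set_option maxHeartbeats 2000000 in
/-- Key estimate: contact slopes depend on contact points in a Lipschitz way. -/
lemma slope_lip {n : ℕ} (hn : 1 ≤ n) {Ω : Set (En n)} (hΩ : IsOpen Ω)
    {a : En n → Matrix (Fin n) (Fin n) ℝ}
    {b : En n → En n} {c : En n → ℝ} {lam Lam : ℝ} (hlam : 0 < lam) (hLam : 0 < Lam)
    (hcoef : EllipticCoeffs Ω a b c lam Lam)
    {u : En n → ℝ} (hu : LowerSemicontinuousOn u Ω) {C : ℝ}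
    (hlin : IsViscositySupersolution (linOp a b c) (fun _ => C) Ω u)
    {ψ : En n → ℝ} (hψ : ContDiffOn ℝ 2 ψ Ω) {x₀ : En n} {R : ℝ} (hR : 0 < R)
    (hball : closedBall x₀ R ⊆ Ω) (D : ℝ) (hD : 0 ≤ D) :
    ∃ K t₀ : ℝ, 0 ≤ K ∧ 0 < t₀ ∧ ∀ x ∈ closedBall x₀ (R / 2), ∀ y ∈ closedBall x₀ (R / 2),
      ∀ p q : En n, ‖p‖ ≤ 1 → |u x - ψ x| ≤ D →
      (∀ z ∈ closedBall x₀ R, u x - ψ x + inner ℝ p (z - x) ≤ u z - ψ z) →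
      (∀ z ∈ closedBall x₀ R, u y - ψ y + inner ℝ q (z - y) ≤ u z - ψ z) →
      ∀ t, 0 < t → t ≤ t₀ → ‖y - x‖ ≤ t → ‖q - p‖ ≤ K * t := by
  -- bounds
  obtain ⟨B, hB0, hB1, hB2, hB3⟩ : ∃ B : ℝ, 0 ≤ B ∧ (∀ z ∈ closedBall x₀ R, |ψ z| ≤ B) ∧
      (∀ z ∈ closedBall x₀ R, ‖gradient ψ z‖ ≤ B) ∧
      (∀ z ∈ closedBall x₀ R, ∀ i j, |hess ψ z i j| ≤ B) := by
    have hc := isCompact_closedBall x₀ R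
    obtain ⟨B1, h1⟩ := hc.exists_bound_of_continuousOn (hψ.continuousOn.mono hball)
    obtain ⟨B2, h2⟩ := hc.exists_bound_of_continuousOn ((gradient_contOn hΩ hψ).mono hball)
    have h3 : ∀ i j, ∃ B3, ∀ z ∈ closedBall x₀ R, ‖hess ψ z i j‖ ≤ B3 := fun i j =>
      hc.exists_bound_of_continuousOn
        ((continuousOn_pi.1 (continuousOn_pi.1 ((hess_contOn hΩ hψ).mono hball) i)) j)
    choose B3 h3 using h3
    refine ⟨|B1| + |B2| + ∑ i, ∑ j, |B3 i j|, by positivity, fun z hz => ?_, fun z hz => ?_,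
      fun z hz i j => ?_⟩
    · have := h1 z hz
      have h0 : 0 ≤ ∑ i, ∑ j, |B3 i j| := by positivity
      rw [Real.norm_eq_abs] at this
      linarith [le_abs_self B1, abs_nonneg B2]
    · have := h2 z hz
      have h0 : 0 ≤ ∑ i, ∑ j, |B3 i j| := by positivity
      linarith [le_abs_self B2, abs_nonneg B1]
    · have := h3 i j z hz
      have h0 : |B3 i j| ≤ ∑ j, |B3 i j| :=
        Finset.single_le_sum (f := fun j => |B3 i j|) (fun _ _ => abs_nonneg _) (Finset.mem_univ j)
      have h0' : ∑ j, |B3 i j| ≤ ∑ i, ∑ j, |B3 i j| :=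
        Finset.single_le_sum (f := fun i => ∑ j, |B3 i j|)
          (fun _ _ => Finset.sum_nonneg fun _ _ => abs_nonneg _) (Finset.mem_univ i)
      rw [Real.norm_eq_abs] at this
      linarith [le_abs_self (B3 i j), abs_nonneg B1, abs_nonneg B2]
  -- constants
  have hnR : (1 : ℝ) ≤ n := by exact_mod_cast hn
  obtain ⟨N, hN1, hN2⟩ : ∃ N : ℝ, 1 < N ∧ 8 * n * Lam ≤ lam * N ^ 2 := by
    refine ⟨2 + 8 * n * Lam / lam, ?_, ?_⟩
    · have : 0 ≤ 8 * n * Lam / lam := by positivity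
      linarith
    · have h0 : 0 ≤ 8 * n * Lam / lam := by positivity
      have h1 : 8 * n * Lam = lam * (8 * n * Lam / lam) := by field_simp
      rw [h1]
      have : 8 * n * Lam / lam ≤ (2 + 8 * n * Lam / lam) ^ 2 := by nlinarith
      rw [← h1]
      calc 8 * n * Lam = lam * (8 * n * Lam / lam) := h1
        _ ≤ _ := mul_le_mul_of_nonneg_left this hlam.le
  have hN0 : 0 < N := by linarith
  set W : ℝ := n * (n * (Lam * B)) + n * (Lam * (B + 1)) + Lam * (B + D + 2 * R) + |C| with hW
  have hW0 : 0 ≤ W := by positivity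
  obtain ⟨r₀, hr₀, hr₀R, hr₀1, hr₀2⟩ : ∃ r₀ : ℝ, 0 < r₀ ∧ N * r₀ ≤ R / 2 ∧ r₀ ≤ 1 ∧
      (12 * n * Lam + 4 * Lam) * r₀ ≤ lam / 2 := by
    refine ⟨min (R / (2 * N)) (min 1 (lam / (2 * (12 * n * Lam + 4 * Lam)))), by positivity,
      ?_, ?_, ?_⟩
    · calc N * _ ≤ N * (R / (2 * N)) := mul_le_mul_of_nonneg_left (min_le_left _ _) hN0.le
        _ = R / 2 := by field_simp
    · exact (min_le_right _ _).trans (min_le_left _ _)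
    · have : 0 < 12 * n * Lam + 4 * Lam := by positivity
      calc (12 * n * Lam + 4 * Lam) * _ ≤ (12 * n * Lam + 4 * Lam) *
            (lam / (2 * (12 * n * Lam + 4 * Lam))) :=
            mul_le_mul_of_nonneg_left ((min_le_right _ _).trans (min_le_right _ _)) this.le
        _ = lam / 2 := by field_simp
  refine ⟨16 * (2 * W / lam), r₀ / 2, by positivity, by positivity, ?_⟩
  intro x hx y hy p q hp hux hxmin hymin t ht htr hxy
  by_cases hs0 : ‖q - p‖ = 0
  · rw [hs0]; positivity
  have hs : 0 < ‖q - p‖ := lt_of_le_of_ne (norm_nonneg _) (Ne.symm hs0)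
  set s := ‖q - p‖ with hsdef
  set e : En n := s⁻¹ • (q - p) with he
  have hen : ‖e‖ = 1 := by
    rw [he, norm_smul, norm_inv, Real.norm_of_nonneg hs.le, ← hsdef]; field_simp
  have hse : q - p = s • e := by rw [he, smul_smul, mul_inv_cancel₀ hs0, one_smul]
  set r := 2 * t with hr
  have hr0 : 0 < r := by positivity
  have hrr : r ≤ r₀ := by linarith
  set α := s / (16 * t) with hα
  have hα0 : 0 < α := by positivity
  have hsα : s = 16 * t * α := by rw [hα]; field_simp
  set κ := 4 * α / N ^ 2 with hκ
  have hκ0 : 0 < κ := by positivity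
  have hκN : κ * N ^ 2 = 4 * α := by rw [hκ]; field_simp
  have hNr : N * r ≤ R / 2 := (mul_le_mul_of_nonneg_left hrr hN0.le).trans hr₀R
  -- lower bounds on w
  have hin : ∀ z, ‖z - x‖ ≤ N * r → z ∈ closedBall x₀ R := by
    intro z hz
    rw [mem_closedBall, dist_eq_norm] at hx ⊢
    calc ‖z - x₀‖ = ‖(z - x) + (x - x₀)‖ := by congr 1; abel
      _ ≤ ‖z - x‖ + ‖x - x₀‖ := norm_add_le _ _
      _ ≤ R := by linarith
  have hie : ∀ z : En n, |inner ℝ e z| ≤ ‖z‖ := by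
    intro z
    have := abs_real_inner_le_norm e z
    rwa [hen, one_mul] at this
  have hw2 : ∀ z ∈ closedBall x₀ R,
      u x - ψ x + inner ℝ p (z - x) + s * (inner ℝ e (z - x) - t) ≤ u z - ψ z := by
    intro z hz
    have h1 := hymin z hz
    have h2 := hxmin y (closedBall_subset_closedBall (by linarith) hy)
    have h3 : inner ℝ q (z - y) = inner ℝ p (z - x) - inner ℝ p (y - x)
        + s * (inner ℝ e (z - x) - inner ℝ e (y - x)) := by
      have : q = p + s • e := by rw [← hse]; abel
      rw [this, ← inner_sub_right, ← inner_sub_right, inner_add_left, inner_smul_left]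
      simp
    have h4 : inner ℝ e (y - x) ≤ t := (le_abs_self _).trans ((hie _).trans hxy)
    have h5 := mul_le_mul_of_nonneg_left h4 hs.le
    rw [h3] at h1
    linarith
  -- the barrier
  set g : En n := p + (2 * α * r) • e with hg
  set c₀ : ℝ := u x - ψ x + α * r ^ 2 with hc₀
  have hqd : ∀ z, qd c₀ g e x α κ z = u x - ψ x + inner ℝ p (z - x)
      + (α * (inner ℝ e (z - x) + r) ^ 2 - κ * ‖z - x‖ ^ 2) := by
    intro z
    simp only [qd, hg, hc₀, inner_add_left, inner_smul_left]
    simp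
    ring
  set Q : Set (En n) := {z | ‖z - x‖ ≤ N * r ∧ |inner ℝ e (z - x)| ≤ r} with hQ
  have hxQ : x ∈ Q := by simp [hQ]; constructor <;> positivity
  have hQsub : Q ⊆ closedBall x₀ R := fun z hz => hin z hz.1
  have hQcl : IsClosed Q := by
    apply IsClosed.inter
    · exact isClosed_le (f := fun z : En n => ‖z - x‖) (by fun_prop) continuous_const
    · exact isClosed_le (f := fun z : En n => |inner ℝ e (z - x)|) (by fun_prop) continuous_const
  have hQc : IsCompact Q := (isCompact_closedBall x₀ R).of_isClosed_subset hQcl hQsub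
  have hcontΨ : ContDiffOn ℝ 2 (fun z => ψ z + qd c₀ g e x α κ z) Ω :=
    hψ.add (qd_contDiff c₀ g e x α κ).contDiffOn
  have hlsc : LowerSemicontinuousOn (fun z => u z + -(ψ z + qd c₀ g e x α κ z)) Q := by
    apply LowerSemicontinuousOn.add
    · exact hu.mono (hQsub.trans hball)
    · exact ((hcontΨ.continuousOn.mono (hQsub.trans hball)).neg).lowerSemicontinuousOn
  obtain ⟨z, hzQ, hzmin⟩ := hlsc.exists_isMinOn ⟨x, hxQ⟩ hQc
  have hmin : ∀ y ∈ Q, u z + -(ψ z + qd c₀ g e x α κ z) ≤ u y + -(ψ y + qd c₀ g e x α κ y) :=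
    fun y hy => hzmin hy
  have hzB := hQsub hzQ
  have hneg : u z + -(ψ z + qd c₀ g e x α κ z) < 0 := by
    have := hmin x hxQ
    rw [hqd x] at this
    simp at this
    have : 0 < α * r ^ 2 := by positivity
    linarith
  have hzx := hxmin z hzB
  have hz2 := hw2 z hzB
  rw [hqd z] at hneg
  set ζ : ℝ := inner ℝ e (z - x) with hζ
  have hζr := abs_le.1 hzQ.2
  have hPle : α * (ζ + r) ^ 2 ≤ 4 * α * r ^ 2 := by
    have : (ζ + r) ^ 2 ≤ (2 * r) ^ 2 := by
      apply pow_le_pow_left₀ <;> linarith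
    nlinarith
  have hPpos : κ * ‖z - x‖ ^ 2 < α * (ζ + r) ^ 2 := by linarith
  -- interior
  have hi1 : ‖z - x‖ < N * r := by
    refine lt_of_le_of_ne hzQ.1 fun h => ?_
    rw [h, mul_pow, ← mul_assoc, hκN] at hPpos
    linarith
  have hi2 : |ζ| < r := by
    rw [abs_lt]
    constructor
    · refine lt_of_le_of_ne hζr.1 fun h => ?_
      rw [← h] at hPpos
      have : 0 ≤ κ * ‖z - x‖ ^ 2 := by positivity
      simp at hPpos
      linarith
    · refine lt_of_le_of_ne hζr.2 fun h => ?_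
      rw [h] at hz2
      have h1 : 0 ≤ κ * ‖z - x‖ ^ 2 := by positivity
      have h2 : s * (r - t) = 4 * α * r ^ 2 := by rw [hsα, hr]; ring
      linarith
  have hnhds : Q ∈ nhds z := by
    have ho : IsOpen {z : En n | ‖z - x‖ < N * r ∧ |inner ℝ e (z - x)| < r} := by
      apply IsOpen.inter
      · exact isOpen_lt (f := fun z : En n => ‖z - x‖) (by fun_prop) continuous_const
      · exact isOpen_lt (f := fun z : En n => |inner ℝ e (z - x)|) (by fun_prop) continuous_const
    exact Filter.mem_of_superset (ho.mem_nhds ⟨hi1, hi2⟩) fun w hw => ⟨hw.1.le, hw.2.le⟩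
  -- apply the linear inequality
  set m : ℝ := u z + -(ψ z + qd c₀ g e x α κ z) with hm
  have hshift : ∀ w, qd (c₀ + m) g e x α κ w = qd c₀ g e x α κ w + m := by
    intro w; simp only [qd]; ring
  have hzΩ := hball hzB
  have hvis := hlin (fun w => ψ w + qd (c₀ + m) g e x α κ w)
    (hψ.add (qd_contDiff (c₀ + m) g e x α κ).contDiffOn) z hzΩ
    (by
      show u z = ψ z + qd (c₀ + m) g e x α κ z
      linarith [hshift z, hm])
    (by
      apply IsLocalMin.on
      filter_upwards [hnhds] with w hw
      have := hmin w hw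
      simp only [hshift]
      linarith)
  have hψz : ContDiffAt ℝ 2 ψ z := hψ.contDiffAt (hΩ.mem_nhds hzΩ)
  have hval : ψ z + qd (c₀ + m) g e x α κ z = u z := by
    linarith [hshift z, hm]
  have hNr1 : κ * (N * r) ≤ 4 * α * r := by
    have h1 : κ * (N * r) * 1 ≤ κ * (N * r) * N :=
      mul_le_mul_of_nonneg_left hN1.le (by positivity)
    have h2 : κ * (N * r) * N = (κ * N ^ 2) * r := by ring
    rw [h2, hκN] at h1
    linarith
  have hgradb : ‖gradient ψ z + qg g e x α κ z‖ ≤ B + 1 + 12 * α * r := by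
    have h1 : gradient ψ z + qg g e x α κ z =
        gradient ψ z + p + ((2 * α * (r + ζ)) • e - (2 * κ) • (z - x)) := by
      simp only [qg, hg, ← hζ]
      module
    rw [h1]
    have h2 : ‖(2 * α * (r + ζ)) • e‖ ≤ 2 * α * (2 * r) := by
      rw [norm_smul, hen, mul_one, Real.norm_of_nonneg
        (mul_nonneg (by positivity) (by linarith))]
      exact mul_le_mul_of_nonneg_left (by linarith) (by positivity)
    have h3 : ‖(2 * κ) • (z - x)‖ ≤ 8 * α * r := by
      rw [norm_smul, Real.norm_of_nonneg (by positivity)]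
      have := mul_le_mul_of_nonneg_left hzQ.1 hκ0.le
      linarith
    calc _ ≤ ‖gradient ψ z + p‖ + ‖(2 * α * (r + ζ)) • e - (2 * κ) • (z - x)‖ := norm_add_le _ _
      _ ≤ (‖gradient ψ z‖ + ‖p‖) + (‖(2 * α * (r + ζ)) • e‖ + ‖(2 * κ) • (z - x)‖) :=
        add_le_add (norm_add_le _ _) (norm_sub_le _ _)
      _ ≤ _ := by linarith [hB2 z hzB]
  have hpz : |inner ℝ p (z - x)| ≤ R := by
    have h1 := abs_real_inner_le_norm p (z - x)
    have h2 : ‖p‖ * ‖z - x‖ ≤ 1 * (N * r) := mul_le_mul hp hzQ.1 (norm_nonneg _) zero_le_one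
    linarith
  have huz : |u z| ≤ B + D + 2 * R + 4 * α * r ^ 2 := by
    have h1 := abs_le.1 (hB1 z hzB)
    have h2 := abs_le.1 hpz
    have h3 := abs_le.1 hux
    have h4 : 0 ≤ κ * ‖z - x‖ ^ 2 := by positivity
    have h5 : 0 ≤ α * r ^ 2 := by positivity
    rw [abs_le]
    constructor <;> linarith
  rw [hval, gradient_add_qd hψz] at hvis
  have hlow := linOp_lower hn hcoef hzΩ (s := u z) (P := gradient ψ z + qg g e x α κ z)
    (e := e) (H := hess ψ z) (M := hess (fun w => ψ w + qd (c₀ + m) g e x α κ w) z)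
    (α := α) (κ := κ) hα0.le hκ0.le hen
    (fun i j => hess_add_qd hψz _ _ _ _ _ _ i j) (hB3 z hzB)
    (fun i => by
      have := PiLp.norm_apply_le (gradient ψ z + qg g e x α κ z) i
      rw [Real.norm_eq_abs] at this
      exact this.trans hgradb) huz
  have hfin := hlow.trans hvis
  have f1 : 2 * κ * (n * Lam) ≤ α * lam := by
    have h1 : κ * (8 * n * Lam) ≤ κ * (lam * N ^ 2) := mul_le_mul_of_nonneg_left hN2 hκ0.le
    have h2 : κ * (lam * N ^ 2) = lam * (4 * α) := by rw [← hκN]; ring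
    linarith
  have f2 : (12 * n * Lam + 4 * Lam) * r ≤ lam / 2 :=
    (mul_le_mul_of_nonneg_left hrr (by positivity)).trans hr₀2
  have f3 : r ^ 2 ≤ r := by nlinarith
  have f4 : Lam * (4 * α * r ^ 2) ≤ Lam * (4 * α * r) := by gcongr
  have f5 := mul_le_mul_of_nonneg_left f2 hα0.le
  have f6 : α * lam ≤ 2 * W := by
    have := le_abs_self C
    rw [hW]
    linarith
  have f7 : α ≤ 2 * W / lam := by rw [le_div_iff₀ hlam]; exact f6
  rw [hsα]
  have := mul_le_mul_of_nonneg_left f7 (by positivity : 0 ≤ 16 * t)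
  linarith

open MeasureTheory in
lemma null_of_inverse_lip {n : ℕ} (X : En n → En n) (S : Set (En n)) (K t₀ : ℝ) (hK : 0 ≤ K)
    (ht₀ : 0 < t₀)
    (h : ∀ p ∈ S, ∀ q ∈ S, ∀ t, 0 < t → t ≤ t₀ → ‖X q - X p‖ ≤ t → ‖q - p‖ ≤ K * t)
    (hnull : volume (X '' S) = 0) : volume S = 0 := by
  have hfin : Module.finrank ℝ (En n) = n := by simp
  have hH : (μH[(n : ℝ)] : Measure (En n)).IsAddHaarMeasure := by
    have := isAddHaarMeasure_hausdorffMeasure (E := En n)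
    rwa [hfin] at this
  have hac1 : (μH[(n : ℝ)] : Measure (En n)) ≪ volume :=
    Measure.absolutelyContinuous_isAddHaarMeasure _ _
  have hac2 : (volume : Measure (En n)) ≪ μH[(n : ℝ)] :=
    Measure.absolutelyContinuous_isAddHaarMeasure _ _
  -- Lipschitz estimate
  have hlip : ∀ p ∈ S, ∀ q ∈ S, ‖X q - X p‖ ≤ t₀ → ‖q - p‖ ≤ K * ‖X q - X p‖ := by
    intro p hp q hq hd
    by_cases h0 : ‖X q - X p‖ = 0
    · rw [h0, mul_zero]
      refine le_of_forall_pos_le_add fun ε hε => ?_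
      have h1 : 0 < min t₀ (ε / (K + 1)) := by positivity
      have h2 := h p hp q hq _ h1 (min_le_left _ _) (by rw [h0]; exact h1.le)
      have h3 : K * min t₀ (ε / (K + 1)) ≤ (K + 1) * (ε / (K + 1)) :=
        mul_le_mul (by linarith) (min_le_right _ _) h1.le (by positivity)
      have h4 : (K + 1) * (ε / (K + 1)) = ε := by field_simp
      linarith
    · exact h p hp q hq _ (lt_of_le_of_ne (norm_nonneg _) (Ne.symm h0)) hd le_rfl
  let d := TopologicalSpace.denseSeq (En n)
  have hcov : S ⊆ ⋃ k, S ∩ X ⁻¹' (ball (d k) (t₀ / 2)) := by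
    intro p hp
    obtain ⟨k, hk⟩ := (TopologicalSpace.denseRange_denseSeq (En n)).exists_dist_lt (X p)
      (half_pos ht₀)
    exact mem_iUnion.2 ⟨k, hp, hk⟩
  refine measure_mono_null hcov (measure_iUnion_null fun k => ?_)
  set T := S ∩ X ⁻¹' (ball (d k) (t₀ / 2)) with hT
  have hTd : ∀ p ∈ T, ∀ q ∈ T, ‖q - p‖ ≤ K * ‖X q - X p‖ := by
    intro p hp q hq
    refine hlip p hp.1 q hq.1 ?_
    have h1 : dist (X p) (d k) < t₀ / 2 := hp.2
    have h2 : dist (X q) (d k) < t₀ / 2 := hq.2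
    rw [← dist_eq_norm]
    linarith [dist_triangle_right (X q) (X p) (d k)]
  have hinj : InjOn X T := by
    intro p hp q hq hpq
    have := hTd p hp q hq
    rw [hpq, sub_self, norm_zero, mul_zero] at this
    exact (sub_eq_zero.1 (norm_le_zero_iff.1 this)).symm
  have hleft := hinj.leftInvOn_invFunOn
  have hL : LipschitzOnWith K.toNNReal (Function.invFunOn X T) (X '' T) := by
    refine LipschitzOnWith.of_dist_le_mul ?_
    rintro _ ⟨p, hp, rfl⟩ _ ⟨q, hq, rfl⟩
    rw [hleft hp, hleft hq, dist_eq_norm, dist_eq_norm, Real.coe_toNNReal _ hK]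
    exact hTd q hq p hp
  have himg : Function.invFunOn X T '' (X '' T) = T := hleft.image_image
  have h1 := hL.hausdorffMeasure_image_le (d := (n : ℝ)) (by positivity)
  rw [himg] at h1
  have h2 : μH[(n : ℝ)] (X '' T) = 0 :=
    hac1 (measure_mono_null (image_mono inter_subset_left) hnull)
  rw [h2, mul_zero] at h1
  exact hac2 (le_antisymm h1 (zero_le))

/-- Contact points outside the null set. -/
lemma exists_contact {n : ℕ} (hn : 1 ≤ n) {Ω : Set (En n)} (hΩ : IsOpen Ω)
    {a : En n → Matrix (Fin n) (Fin n) ℝ}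
    {b : En n → En n} {c : En n → ℝ} {lam Lam : ℝ} (hlam : 0 < lam) (hLam : 0 < Lam)
    (hcoef : EllipticCoeffs Ω a b c lam Lam)
    {u : En n → ℝ} (hu : LowerSemicontinuousOn u Ω) {C : ℝ}
    (hlin : IsViscositySupersolution (linOp a b c) (fun _ => C) Ω u)
    {E : Set (En n)} (hEnull : MeasureTheory.volume E = 0)
    {ψ : En n → ℝ} (hψ : ContDiffOn ℝ 2 ψ Ω) {x₀ : En n} {R : ℝ} (hR : 0 < R)
    (hball : closedBall x₀ R ⊆ Ω) {δ : ℝ} (hδ : 0 < δ) (hx₀ : u x₀ = ψ x₀)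
    (hmin : ∀ z ∈ closedBall x₀ R, δ * ‖z - x₀‖ ^ 2 ≤ u z - ψ z) {ε : ℝ} (hε : 0 < ε) :
    ∃ x ∈ Ω \ E, ∃ p : En n, ‖p‖ < ε ∧ ‖x - x₀‖ < ε ∧ |u x - ψ x| < ε ∧
      IsLocalMin (fun z => u z - (ψ z + inner ℝ p (z - x))) x := by
  obtain ⟨K, t₀, hK, ht₀, hlip⟩ := slope_lip hn hΩ hlam hLam hcoef hu hlin hψ hR hball R hR.le
  obtain ⟨η, hη, hη1, hηR, hηε, hηε1, hηε2⟩ : ∃ η : ℝ, 0 < η ∧ η ≤ 1 ∧ η / δ ≤ R / 2 ∧ η ≤ ε ∧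
      η / δ ≤ ε ∧ η * (η / δ) ≤ ε := by
    refine ⟨min 1 (min (δ * (R / 2)) (min ε (δ * ε))), by positivity, min_le_left _ _, ?_, ?_, ?_, ?_⟩
    · rw [div_le_iff₀ hδ]
      refine ((min_le_right _ _).trans (min_le_left _ _)).trans ?_
      linarith
    · exact ((min_le_right _ _).trans (min_le_right _ _)).trans (min_le_left _ _)
    · rw [div_le_iff₀ hδ]
      refine (((min_le_right _ _).trans (min_le_right _ _)).trans (min_le_right _ _)).trans ?_
      linarith
    · set η := min 1 (min (δ * (R / 2)) (min ε (δ * ε)))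
      have h1 : η / δ ≤ ε := by
        rw [div_le_iff₀ hδ]
        refine (((min_le_right _ _).trans (min_le_right _ _)).trans (min_le_right _ _)).trans ?_
        linarith
      have h0 : 0 < η := by positivity
      have h2 : η ≤ 1 := min_le_left _ _
      have : η * (η / δ) ≤ 1 * (η / δ) := mul_le_mul_of_nonneg_right h2 (by positivity)
      linarith
  have hcont := hψ.continuousOn
  have hX : ∀ p : En n, ∃ x ∈ closedBall x₀ R, ∀ z ∈ closedBall x₀ R,
      u x - ψ x + inner ℝ p (z - x) ≤ u z - ψ z := by
    intro p
    have hlsc : LowerSemicontinuousOn (fun z => u z + -(ψ z + inner ℝ p (z - x₀)))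
        (closedBall x₀ R) := by
      apply LowerSemicontinuousOn.add
      · exact hu.mono hball
      · apply ContinuousOn.lowerSemicontinuousOn
        have h1 : Continuous (fun z : En n => inner ℝ p (z - x₀)) := by fun_prop
        exact ((hcont.mono hball).add h1.continuousOn).neg
    obtain ⟨x, hx, hxm⟩ := hlsc.exists_isMinOn ⟨x₀, mem_closedBall_self hR.le⟩
      (isCompact_closedBall x₀ R)
    refine ⟨x, hx, fun z hz => ?_⟩
    have h1 : u x + -(ψ x + inner ℝ p (x - x₀)) ≤ u z + -(ψ z + inner ℝ p (z - x₀)) := hxm hz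
    have h2 : inner ℝ p (z - x) = inner ℝ p (z - x₀) - inner ℝ p (x - x₀) := by
      rw [← inner_sub_right]; congr 1; abel
    linarith
  choose X hX1 hX2 using hX
  have hA : ∀ p : En n, ‖p‖ < η → ‖X p - x₀‖ ≤ ‖p‖ / δ ∧ 0 ≤ u (X p) - ψ (X p) ∧
      u (X p) - ψ (X p) ≤ ‖p‖ * (‖p‖ / δ) := by
    intro p hp
    have h1 := hX2 p x₀ (mem_closedBall_self hR.le)
    have h2 := hmin (X p) (hX1 p)
    have h3 : inner ℝ p (x₀ - X p) = - inner ℝ p (X p - x₀) := by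
      rw [← inner_neg_right]; congr 1; abel
    have h4 := real_inner_le_norm p (X p - x₀)
    have h5 : δ * ‖X p - x₀‖ ^ 2 ≤ ‖p‖ * ‖X p - x₀‖ := by linarith
    have h6 : ‖X p - x₀‖ ≤ ‖p‖ / δ := by
      rw [le_div_iff₀ hδ]
      by_cases h0 : ‖X p - x₀‖ = 0
      · rw [h0, zero_mul]; exact norm_nonneg _
      · have hpos : 0 < ‖X p - x₀‖ := lt_of_le_of_ne (norm_nonneg _) (Ne.symm h0)
        have : ‖X p - x₀‖ * (‖X p - x₀‖ * δ) ≤ ‖X p - x₀‖ * ‖p‖ := by linarith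
        exact le_of_mul_le_mul_left this hpos
    refine ⟨h6, le_trans (by positivity) h2, ?_⟩
    have := mul_le_mul_of_nonneg_left h6 (norm_nonneg p)
    linarith
  have hη2 : ∀ p : En n, ‖p‖ < η → ‖p‖ / δ < η / δ := fun p hp => div_lt_div_of_pos_right hp hδ
  have hη3 : ∀ p : En n, ‖p‖ < η → ‖p‖ * (‖p‖ / δ) < η * (η / δ) := fun p hp =>
    mul_lt_mul'' hp (hη2 p hp) (norm_nonneg _) (by positivity)
  by_contra hcon
  push Not at hcon
  have hall : ∀ p ∈ ball (0 : En n) η, X p ∈ E := by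
    intro p hp
    rw [mem_ball_zero_iff] at hp
    by_contra hE
    obtain ⟨h1, h2, h3⟩ := hA p hp
    have h4 := hη2 p hp
    have h5 := hη3 p hp
    refine hcon (X p) ⟨hball (hX1 p), hE⟩ p (by linarith) (by linarith)
      (by rw [abs_lt]; constructor <;> linarith) ?_
    have hnh : closedBall x₀ R ∈ nhds (X p) := by
      refine Filter.mem_of_superset (isOpen_ball.mem_nhds ?_) (ball_subset_closedBall (ε := R))
      rw [mem_ball, dist_eq_norm]; linarith
    filter_upwards [hnh] with z hz
    have := hX2 p z hz
    simp only [sub_self, inner_zero_right]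
    linarith
  have hmem : ∀ p ∈ ball (0 : En n) η, X p ∈ closedBall x₀ (R / 2) := by
    intro p hp
    rw [mem_ball_zero_iff] at hp
    have h1 := (hA p hp).1
    have h4 := hη2 p hp
    rw [mem_closedBall, dist_eq_norm]; linarith
  have hzero := null_of_inverse_lip X (ball 0 η) K t₀ hK ht₀
    (by
      intro p hp q hq t ht htt hd
      have hp' := hp
      rw [mem_ball_zero_iff] at hp'
      obtain ⟨h1, h2, h3⟩ := hA p hp'
      have h4 := hη2 p hp'
      have h5 := hη3 p hp'
      have h6 : η * (η / δ) ≤ 1 * (η / δ) := mul_le_mul_of_nonneg_right hη1 (by positivity)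
      exact hlip (X p) (hmem p hp) (X q) (hmem q hq) p q (by linarith)
        (by rw [abs_le]; constructor <;> linarith) (hX2 p) (hX2 q) t ht htt hd)
    (MeasureTheory.measure_mono_null (image_subset_iff.2 hall) hEnull)
  exact (measure_ball_pos MeasureTheory.volume (0 : En n) hη).ne' hzero

lemma strict_case
    {n : ℕ} (hn : 1 ≤ n) {Ω : Set (En n)} (hΩ : IsOpen Ω)
    {F : En n → ℝ → En n → Matrix (Fin n) (Fin n) ℝ → ℝ}
    (hFcont : ContinuousOn
      (fun q : En n × ℝ × En n × Matrix (Fin n) (Fin n) ℝ => F q.1 q.2.1 q.2.2.1 q.2.2.2)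
      {q | q.1 ∈ Ω})
    {a : En n → Matrix (Fin n) (Fin n) ℝ} {b : En n → En n} {c : En n → ℝ}
    {lam Lam : ℝ} (hlam : 0 < lam) (hLam : 0 < Lam)
    (hcoef : EllipticCoeffs Ω a b c lam Lam)
    {f : En n → ℝ} (hf : UpperSemicontinuousOn f Ω)
    {u : En n → ℝ} (hu : LowerSemicontinuousOn u Ω)
    {C : ℝ}
    (hlin : IsViscositySupersolution (linOp a b c) (fun _ => C) Ω u)
    {E : Set (En n)} (hEnull : MeasureTheory.volume E = 0)
    (hvisc : IsViscositySupersolution F f (Ω \ E) u)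
    {ψ : En n → ℝ} (hψ : ContDiffOn ℝ 2 ψ Ω) {x₀ : En n} {R : ℝ} (hR : 0 < R)
    (hball : closedBall x₀ R ⊆ Ω) {δ : ℝ} (hδ : 0 < δ) (hx₀ : u x₀ = ψ x₀)
    (hmin : ∀ z ∈ closedBall x₀ R, δ * ‖z - x₀‖ ^ 2 ≤ u z - ψ z) :
    F x₀ (ψ x₀) (gradient ψ x₀) (hess ψ x₀) ≤ f x₀ := by
  have hx₀Ω : x₀ ∈ Ω := hball (mem_closedBall_self hR.le)
  have hex := fun k : ℕ => exists_contact hn hΩ hlam hLam hcoef hu hlin hEnull hψ hR hball hδ hx₀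
    hmin (ε := 1 / ((k : ℝ) + 1)) (by positivity)
  choose x hxΩE p hp hx hux hloc using hex
  have hxΩ : ∀ k, x k ∈ Ω := fun k => (hxΩE k).1
  have hineq : ∀ k, F (x k) (u (x k)) (gradient ψ (x k) + p k) (hess ψ (x k)) ≤ f (x k) := by
    intro k
    have hψx : ContDiffAt ℝ 2 ψ (x k) := hψ.contDiffAt (hΩ.mem_nhds (hxΩ k))
    have hq : ∀ z, qd (u (x k) - ψ (x k)) (p k) 0 (x k) 0 0 z =
        u (x k) - ψ (x k) + inner ℝ (p k) (z - x k) := by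
      intro z; simp [qd]
    have h1 := hvisc (fun z => ψ z + qd (u (x k) - ψ (x k)) (p k) 0 (x k) 0 0 z)
      ((hψ.add (qd_contDiff _ _ _ _ _ _).contDiffOn).mono diff_subset) (x k) (hxΩE k)
      (by simp [hq])
      (by
        apply IsLocalMin.on
        filter_upwards [hloc k] with z hz
        simp only [hq, sub_self, inner_zero_right] at hz ⊢
        linarith)
    rw [gradient_add_qd hψx] at h1
    have h2 : hess (fun z => ψ z + qd (u (x k) - ψ (x k)) (p k) 0 (x k) 0 0 z) (x k)
        = hess ψ (x k) := by
      ext i j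
      rw [hess_add_qd hψx]; simp
    rw [h2, hq] at h1
    simpa [qg] using h1
  have h0 : Filter.Tendsto (fun k : ℕ => 1 / ((k : ℝ) + 1)) Filter.atTop (nhds 0) :=
    tendsto_one_div_add_atTop_nhds_zero_nat
  have hxt : Filter.Tendsto x Filter.atTop (nhds x₀) := by
    rw [tendsto_iff_norm_sub_tendsto_zero]
    exact squeeze_zero (fun _ => norm_nonneg _) (fun k => (hx k).le) h0
  have hxt' : Filter.Tendsto x Filter.atTop (nhdsWithin x₀ Ω) :=
    tendsto_nhdsWithin_iff.2 ⟨hxt, Filter.Eventually.of_forall hxΩ⟩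
  have hpt : Filter.Tendsto p Filter.atTop (nhds 0) := by
    rw [tendsto_zero_iff_norm_tendsto_zero]
    exact squeeze_zero (fun _ => norm_nonneg _) (fun k => (hp k).le) h0
  have hut : Filter.Tendsto (fun k => u (x k)) Filter.atTop (nhds (ψ x₀)) := by
    have h1 : Filter.Tendsto (fun k => u (x k) - ψ (x k)) Filter.atTop (nhds 0) := by
      rw [tendsto_zero_iff_norm_tendsto_zero]
      exact squeeze_zero (fun _ => norm_nonneg _) (fun k => (hux k).le) h0
    have h2 : Filter.Tendsto (fun k => ψ (x k)) Filter.atTop (nhds (ψ x₀)) :=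
      (hψ.continuousOn x₀ hx₀Ω).tendsto.comp hxt'
    simpa using h1.add h2
  have hgt : Filter.Tendsto (fun k => gradient ψ (x k) + p k) Filter.atTop
      (nhds (gradient ψ x₀)) := by
    have h2 : Filter.Tendsto (fun k => gradient ψ (x k)) Filter.atTop (nhds (gradient ψ x₀)) :=
      (gradient_contOn hΩ hψ x₀ hx₀Ω).tendsto.comp hxt'
    simpa using h2.add hpt
  have hht : Filter.Tendsto (fun k => hess ψ (x k)) Filter.atTop (nhds (hess ψ x₀)) :=
    (hess_contOn hΩ hψ x₀ hx₀Ω).tendsto.comp hxt'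
  have hFt : Filter.Tendsto
      (fun k => F (x k) (u (x k)) (gradient ψ (x k) + p k) (hess ψ (x k))) Filter.atTop
      (nhds (F x₀ (ψ x₀) (gradient ψ x₀) (hess ψ x₀))) := by
    have h1 := (hFcont (x₀, ψ x₀, gradient ψ x₀, hess ψ x₀) hx₀Ω).tendsto
    have h2 : Filter.Tendsto (fun k => (x k, u (x k), gradient ψ (x k) + p k, hess ψ (x k)))
        Filter.atTop (nhdsWithin (x₀, ψ x₀, gradient ψ x₀, hess ψ x₀) {q | q.1 ∈ Ω}) :=
      tendsto_nhdsWithin_iff.2 ⟨hxt.prodMk_nhds (hut.prodMk_nhds (hgt.prodMk_nhds hht)),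
        Filter.Eventually.of_forall hxΩ⟩
    exact h1.comp h2
  by_contra hcon
  push Not at hcon
  obtain ⟨y, hy1, hy2⟩ := exists_between hcon
  have h1 := hxt'.eventually (hf x₀ hx₀Ω y hy1)
  have h2 := hFt.eventually (lt_mem_nhds hy2)
  obtain ⟨k, hk1, hk2⟩ := (h1.and h2).exists
  linarith [hineq k]

/-- **Theorem 1.2.** A viscosity supersolution of a degenerate elliptic equation outside a
set `E` of zero Lebesgue measure, which is also a viscosity supersolution of a uniformly
elliptic linear inequality in all of `Ω`, is a viscosity supersolution in all of `Ω`. -/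
theorem removable_null_singularity
    {n : ℕ} (hn : 1 ≤ n) (Ω : Set (En n))
    (hΩopen : IsOpen Ω) (hΩconn : IsConnected Ω) (hΩbdd : Bornology.IsBounded Ω)
    (F : En n → ℝ → En n → Matrix (Fin n) (Fin n) ℝ → ℝ)
    (hFcont : ContinuousOn
      (fun q : En n × ℝ × En n × Matrix (Fin n) (Fin n) ℝ => F q.1 q.2.1 q.2.2.1 q.2.2.2)
      {q | q.1 ∈ Ω})
    (hFell : DegenerateElliptic Ω F)
    (a : En n → Matrix (Fin n) (Fin n) ℝ) (b : En n → En n) (c : En n → ℝ)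
    (lam Lam : ℝ) (hlam : 0 < lam) (hLam : 0 < Lam)
    (hcoef : EllipticCoeffs Ω a b c lam Lam)
    (f : En n → ℝ) (hf : UpperSemicontinuousOn f Ω)
    (u : En n → ℝ) (hu : LowerSemicontinuousOn u Ω)
    (C : ℝ)
    (hlin : IsViscositySupersolution (linOp a b c) (fun _ => C) Ω u)
    (E : Set (En n)) (hEΩ : E ⊆ Ω) (hEnull : MeasureTheory.volume E = 0)
    (hvisc : IsViscositySupersolution F f (Ω \ E) u) :
    IsViscositySupersolution F f Ω u := by
  intro φ hφ x₀ hx₀ hux hloc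
  have hloc' : ∀ᶠ z in nhds x₀, u x₀ - φ x₀ ≤ u z - φ z := by
    have h1 : ∀ᶠ z in nhdsWithin x₀ Ω, u x₀ - φ x₀ ≤ u z - φ z := hloc
    rwa [hΩopen.nhdsWithin_eq hx₀] at h1
  obtain ⟨R, hR, hRsub⟩ := Metric.nhds_basis_closedBall.mem_iff.1
    (Filter.inter_mem hloc' (hΩopen.mem_nhds hx₀))
  have hφx : ContDiffAt ℝ 2 φ x₀ := hφ.contDiffAt (hΩopen.mem_nhds hx₀)
  have hδ : ∀ δ : ℝ, 0 < δ → F x₀ (φ x₀) (gradient φ x₀)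
      (hess φ x₀ - (2 * δ) • (1 : Matrix (Fin n) (Fin n) ℝ)) ≤ f x₀ := by
    intro δ hδ
    have hq : ∀ z, qd 0 0 0 x₀ 0 δ z = -(δ * ‖z - x₀‖ ^ 2) := by
      intro z; simp [qd]
    have h1 := strict_case hn hΩopen hFcont hlam hLam hcoef hf hu hlin hEnull hvisc
      (ψ := fun z => φ z + qd 0 0 0 x₀ 0 δ z) (hφ.add (qd_contDiff _ _ _ _ _ _).contDiffOn)
      hR (fun z hz => (hRsub hz).2) hδ (by simp [hq, hux])
      (by
        intro z hz
        have : u x₀ - φ x₀ ≤ u z - φ z := (hRsub hz).1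
        simp only [hq]
        linarith)
    have h2 : hess (fun z => φ z + qd 0 0 0 x₀ 0 δ z) x₀ =
        hess φ x₀ - (2 * δ) • (1 : Matrix (Fin n) (Fin n) ℝ) := by
      ext i j
      rw [hess_add_qd hφx]
      simp [Matrix.one_apply, sub_eq_add_neg]
    rw [gradient_add_qd hφx, h2, hq] at h1
    simpa [qg] using h1
  have hM : Filter.Tendsto
      (fun δ : ℝ => hess φ x₀ - (2 * δ) • (1 : Matrix (Fin n) (Fin n) ℝ))
      (nhdsWithin 0 (Ioi 0)) (nhds (hess φ x₀)) := by
    have : Continuous (fun δ : ℝ => hess φ x₀ - (2 * δ) • (1 : Matrix (Fin n) (Fin n) ℝ)) := by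
      fun_prop
    have h2 := this.tendsto 0
    simp only [mul_zero, zero_smul, sub_zero] at h2
    exact h2.mono_left nhdsWithin_le_nhds
  have hFt : Filter.Tendsto (fun δ : ℝ => F x₀ (φ x₀) (gradient φ x₀)
      (hess φ x₀ - (2 * δ) • (1 : Matrix (Fin n) (Fin n) ℝ)))
      (nhdsWithin 0 (Ioi 0)) (nhds (F x₀ (φ x₀) (gradient φ x₀) (hess φ x₀))) := by
    have h1 := (hFcont (x₀, φ x₀, gradient φ x₀, hess φ x₀) hx₀).tendsto
    have h2 : Filter.Tendsto (fun δ : ℝ => (x₀, φ x₀, gradient φ x₀,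
        hess φ x₀ - (2 * δ) • (1 : Matrix (Fin n) (Fin n) ℝ)))
        (nhdsWithin 0 (Ioi 0))
        (nhdsWithin (x₀, φ x₀, gradient φ x₀, hess φ x₀) {q | q.1 ∈ Ω}) :=
      tendsto_nhdsWithin_iff.2 ⟨tendsto_const_nhds.prodMk_nhds (tendsto_const_nhds.prodMk_nhds
        (tendsto_const_nhds.prodMk_nhds hM)), Filter.Eventually.of_forall fun _ => hx₀⟩
    exact h1.comp h2
  refine le_of_tendsto hFt ?_
  filter_upwards [self_mem_nhdsWithin] with δ hδ'
  exact hδ δ hδ'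
end
end

section
/- Let Ω ⊂ ℝⁿ be a bounded domain with C² boundary, let a_ij, b_i, c ∈ L^∞(Ω) satisfy the uniform ellipticity and boundedness conditions with constants λ, Λ, and let B ⊂ Ω be a ball of radius δ. Then there exist positive constants ε̄ and μ̄, depending only on n, λ, Λ, δ, and Ω, such that: if u ∈ LSC(Ω) satisfies a_ij(x)∂_ij u + b_i(x)∂_i u + c(x)u ≤ ε̄ in Ω in the viscosity sense, u ≥ 0 in Ω, and u ≥ 1 on B, then u(x) ≥ μ̄ · dist(x, ∂Ω) for all x ∈ Ω. -/
open Set Metric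

noncomputable section

/-- `Ω` has `C²` boundary: near every boundary point there is a `C²` local defining
function with nonvanishing gradient. -/
def HasC2Boundary {n : ℕ} (Ω : Set (En n)) : Prop :=
  ∀ x ∈ frontier Ω, ∃ (U : Set (En n)) (ρ : En n → ℝ),
    IsOpen U ∧ x ∈ U ∧ ContDiffOn ℝ 2 ρ U ∧
    Ω ∩ U = {y ∈ U | ρ y < 0} ∧ frontier Ω ∩ U = {y ∈ U | ρ y = 0} ∧
    ∀ y ∈ frontier Ω ∩ U, gradient ρ y ≠ 0


/-- the (scaled and shifted) Hopf barrier -/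
def barr {n : ℕ} (y : En n) (m α k : ℝ) (x : En n) : ℝ :=
  m * Real.exp (-α * ‖x - y‖ ^ 2) + k

lemma barr_hasFDerivAt {n : ℕ} (y : En n) (m α k : ℝ) (x : En n) :
    HasFDerivAt (barr y m α k)
      ((-2 * α * m * Real.exp (-α * ‖x - y‖ ^ 2)) • (innerSL ℝ (x - y))) x := by
  have h1 : HasFDerivAt (fun x : En n => x - y) (ContinuousLinearMap.id ℝ (En n)) x :=
    (hasFDerivAt_id x).sub_const y
  have h2 := (((h1.norm_sq.const_mul (-α)).exp).const_mul m).add_const k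
  refine h2.congr_fderiv ?_
  ext v
  simp
  ring

lemma barr_contDiff {n : ℕ} (y : En n) (m α k : ℝ) : ContDiff ℝ 2 (barr y m α k) := by
  unfold barr
  have h : ContDiff ℝ 2 (fun x : En n => ‖x - y‖ ^ 2) :=
    (contDiff_id.sub contDiff_const).norm_sq ℝ
  exact (contDiff_const.mul ((contDiff_const.mul h).exp)).add contDiff_const

lemma barr_gradient {n : ℕ} (y : En n) (m α k : ℝ) (x : En n) (i : Fin n) :
    gradient (barr y m α k) x i = -2 * α * m * Real.exp (-α * ‖x - y‖ ^ 2) * (x - y) i := by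
  have h : gradient (barr y m α k) x i =
      inner ℝ (gradient (barr y m α k) x) (EuclideanSpace.single i (1 : ℝ)) := by
    rw [EuclideanSpace.inner_single_right]; simp
  rw [h, inner_gradient_left, (barr_hasFDerivAt y m α k x).fderiv]
  simp only [smul_apply, innerSL_apply_apply,
    EuclideanSpace.inner_single_right, smul_eq_mul]
  simp

lemma barr_hess {n : ℕ} (y : En n) (m α k : ℝ) (x : En n) (i j : Fin n) :
    hess (barr y m α k) x i j = m * Real.exp (-α * ‖x - y‖ ^ 2) *
      (4 * α ^ 2 * ((x - y) i * (x - y) j) - if i = j then 2 * α else 0) := by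
  have hf : fderiv ℝ (barr y m α k) = fun x =>
      ((barr y (-2 * α * m) α 0 x) • (innerSL ℝ (x - y))) := by
    funext x
    rw [(barr_hasFDerivAt y m α k x).fderiv]
    simp [barr]
  obtain ⟨J, hJ, h1⟩ : ∃ J : En n →L[ℝ] (En n →L[ℝ] ℝ), (∀ v w, J v w = inner ℝ v w) ∧
      HasFDerivAt (fun x : En n => innerSL ℝ (x - y)) J x := by
    refine ⟨innerSL ℝ, fun _ _ => rfl, ?_⟩
    have := ((innerSL ℝ : En n →L[ℝ] (En n →L[ℝ] ℝ)).hasFDerivAt (x := x - y)).comp x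
      ((hasFDerivAt_id x).sub_const y)
    exact this
  have h2 := (barr_hasFDerivAt y (-2 * α * m) α 0 x).smul h1
  simp only [hess, Matrix.of_apply, iteratedFDeriv_two_apply, hf]
  erw [h2.fderiv]
  simp only [Matrix.cons_val_zero, Matrix.cons_val_one, add_apply,
    smul_apply, ContinuousLinearMap.smulRight_apply, innerSL_apply_apply, hJ,
    EuclideanSpace.inner_single_right, smul_eq_mul, barr]
  by_cases hij : i = j
  · subst hij; simp; ring
  · have : j ≠ i := fun h => hij h.symm
    simp [hij, this]; ring

lemma exists_alpha (n : ℕ) (lam Lam ρ r : ℝ) (hlam : 0 < lam) (hLam : 0 < Lam) (hρ : 0 < ρ)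
    (hr : 0 < r) : ∃ α : ℝ, 1 ≤ α ∧
      1 ≤ 4 * α ^ 2 * (lam * ρ ^ 2) - 2 * α * (n * Lam) - 2 * α * (n * Lam * r) - Lam := by
  set q := 4 * (lam * ρ ^ 2) with hq
  have hq0 : 0 < q := by positivity
  set p := 2 * n * Lam * (1 + r) + Lam + 1 with hp
  refine ⟨max 1 (p / q), le_max_left _ _, ?_⟩
  set α := max 1 (p / q)
  have h1 : 1 ≤ α := le_max_left _ _
  have h2 : p ≤ α * q := by
    have : p / q ≤ α := le_max_right _ _
    rwa [div_le_iff₀ hq0] at this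
  have h3 : α * p ≤ α * (α * q) := mul_le_mul_of_nonneg_left h2 (by linarith)
  have h4 : (Lam + 1) ≤ α * (Lam + 1) := by nlinarith
  have e1 : α * (α * q) = 4 * α ^ 2 * (lam * ρ ^ 2) := by rw [hq]; ring
  have e2 : α * p = 2 * α * (n * Lam) + 2 * α * (n * Lam * r) + α * (Lam + 1) := by rw [hp]; ring
  linarith

lemma barr_linOp {n : ℕ} (hn : 0 < n) {Ω : Set (En n)} {a : En n → Matrix (Fin n) (Fin n) ℝ}
    {b : En n → En n} {c : En n → ℝ} {lam Lam : ℝ} (hlam : 0 < lam) (hLam : 0 < Lam)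
    (hE : EllipticCoeffs Ω a b c lam Lam) (y q : En n) (hq : q ∈ Ω) {m α k ρ r s : ℝ} (hm : 0 < m)
    (hα : 1 ≤ α) (hρ : 0 < ρ)
    (h1 : 1 ≤ 4 * α ^ 2 * (lam * ρ ^ 2) - 2 * α * (n * Lam) - 2 * α * (n * Lam * r) - Lam)
    (hq1 : ρ ≤ ‖q - y‖) (hq2 : ‖q - y‖ ≤ r) (hs0 : 0 ≤ s)
    (hs : s ≤ m * Real.exp (-α * ‖q - y‖ ^ 2)) :
    m * Real.exp (-α * ‖q - y‖ ^ 2) ≤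
      linOp a b c q s (gradient (barr y m α k) q) (hess (barr y m α k) q) := by
  set E := m * Real.exp (-α * ‖q - y‖ ^ 2) with hEE
  have hE0 : 0 < E := by positivity
  set z := q - y with hz
  have hab : ∀ i j, |a q i j| ≤ Lam := fun i j => by
    have := hE.1 q hq i j
    have := abs_nonneg (b q i); have := abs_nonneg (c q); linarith
  have hb : ∀ i, |b q i| ≤ Lam := fun i => by
    have := hE.1 q hq i i
    have := abs_nonneg (a q i i); have := abs_nonneg (c q); linarith
  have hc : |c q| ≤ Lam := by
    have := hE.1 q hq ⟨0, hn⟩ ⟨0, hn⟩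
    have := abs_nonneg (a q ⟨0, hn⟩ ⟨0, hn⟩); have := abs_nonneg (b q ⟨0, hn⟩); linarith
  have hel := hE.2 q hq z
  have hsum1 : ∑ i, ∑ j, a q i j * hess (barr y m α k) q i j =
      E * (4 * α ^ 2 * (∑ i, ∑ j, a q i j * z i * z j) - 2 * α * ∑ i, a q i i) := by
    have : ∀ i j, a q i j * hess (barr y m α k) q i j =
        E * (4 * α ^ 2) * (a q i j * z i * z j) - (if i = j then E * (2 * α) * a q i j else 0) := by
      intro i j
      rw [barr_hess]
      split_ifs <;> ring
    simp only [this, Finset.sum_sub_distrib, Finset.sum_ite_eq, Finset.mem_univ, if_true,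
      ← Finset.mul_sum]
    ring
  have hsum2 : ∑ i, b q i * gradient (barr y m α k) q i = E * (-2 * α * ∑ i, b q i * z i) := by
    simp only [barr_gradient, Finset.mul_sum]
    refine Finset.sum_congr rfl fun i _ => ?_
    rw [hEE]; ring
  have hT : ∑ i, a q i i ≤ n * Lam := by
    calc ∑ i, a q i i ≤ ∑ _i : Fin n, Lam :=
          Finset.sum_le_sum fun i _ => (le_abs_self _).trans (hab i i)
      _ = n * Lam := by simp
  have hr0 : 0 ≤ r := (norm_nonneg _).trans hq2
  have hB : ∑ i, b q i * z i ≤ n * Lam * r := by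
    calc ∑ i, b q i * z i ≤ ∑ _i : Fin n, Lam * r := by
          refine Finset.sum_le_sum fun i _ => (le_abs_self _).trans ?_
          rw [abs_mul]
          refine mul_le_mul (hb i) ?_ (abs_nonneg _) hLam.le
          have := PiLp.norm_apply_le z i
          rw [Real.norm_eq_abs] at this
          exact this.trans hq2
      _ = n * Lam * r := by simp; ring
  have hcs : -(E * Lam) ≤ c q * s := by
    have h := abs_mul (c q) s
    have h2 : |c q| * |s| ≤ Lam * E := by
      rw [abs_of_nonneg hs0]; exact mul_le_mul hc hs hs0 hLam.le
    have := neg_abs_le (c q * s)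
    linarith
  unfold linOp
  rw [hsum1, hsum2]
  have hA : lam * ρ ^ 2 ≤ ∑ i, ∑ j, a q i j * z i * z j := by
    refine le_trans ?_ hel
    gcongr
  have k1 : 4 * α ^ 2 * (lam * ρ ^ 2) ≤ 4 * α ^ 2 * ∑ i, ∑ j, a q i j * z i * z j := by gcongr
  have k2 : 2 * α * ∑ i, a q i i ≤ 2 * α * (n * Lam) := by gcongr
  have k3 : 2 * α * ∑ i, b q i * z i ≤ 2 * α * (n * Lam * r) := by gcongr
  have k4 : E * 1 ≤ E * (4 * α ^ 2 * (∑ i, ∑ j, a q i j * z i * z j) - 2 * α * (∑ i, a q i i)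
      - 2 * α * (∑ i, b q i * z i) - Lam) := by
    apply mul_le_mul_of_nonneg_left _ hE0.le
    linarith
  linarith

/-- `u` is a nonnegative supersolution with right hand side `ε` for some admissible operator. -/
def Cls {n : ℕ} (Ω : Set (En n)) (lam Lam ε : ℝ) (u : En n → ℝ) : Prop :=
  ∃ (a : En n → Matrix (Fin n) (Fin n) ℝ) (b : En n → En n) (c : En n → ℝ),
    EllipticCoeffs Ω a b c lam Lam ∧ LowerSemicontinuousOn u Ω ∧
    IsViscositySupersolution (linOp a b c) (fun _ => ε) Ω u ∧ ∀ x ∈ Ω, 0 ≤ u x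

lemma Cls.mono {n : ℕ} {Ω : Set (En n)} {lam Lam ε ε' : ℝ} {u : En n → ℝ}
    (h : Cls Ω lam Lam ε u) (he : ε ≤ ε') : Cls Ω lam Lam ε' u := by
  obtain ⟨a, b, c, h1, h2, h3, h4⟩ := h
  exact ⟨a, b, c, h1, h2, fun φ hφ x hx h5 h6 => (h3 φ hφ x hx h5 h6).trans he, h4⟩

lemma hopf_ball {n : ℕ} (hn : 0 < n) {Ω : Set (En n)} {lam Lam : ℝ} (hlam : 0 < lam)
    (hLam : 0 < Lam) {ρ r : ℝ} (hρ : 0 < ρ) (hr : 0 < r) :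
    ∃ κ > (0 : ℝ), ∃ μ > (0 : ℝ), ∀ (y : En n), ball y r ⊆ Ω → ∀ m > 0, ∀ u,
      Cls Ω lam Lam (m * κ) u → (∀ x ∈ ball y ρ, m ≤ u x) →
      ∀ x ∈ ball y r, m * μ * (r - dist x y) ≤ u x := by
  obtain ⟨α, hα, h1⟩ := exists_alpha n lam Lam ρ r hlam hLam hρ hr
  set e := Real.exp (-α * r ^ 2) with he
  have he0 : 0 < e := Real.exp_pos _
  have hα0 : 0 < α := by linarith
  refine ⟨e / 2, by positivity, e * α * r, by positivity, ?_⟩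
  rintro y hy m hm u ⟨a, b, c, hE, hlsc, hvis, hnn⟩ hin
  have key : ∀ p ∈ ball y r, barr y m α (-(m * e)) p ≤ u p := by
    by_contra hcon
    push Not at hcon
    obtain ⟨p, hp, hlt⟩ := hcon
    set w := barr y m α (-(m * e)) with hw
    have hwc : Continuous w := (barr_contDiff y m α _).continuous
    -- choose s
    have hrad : ∃ s, dist p y ≤ s ∧ s < r ∧ 0 ≤ s ∧
        m * Real.exp (-α * s ^ 2) - m * e < w p - u p := by
      have hct : Continuous fun s : ℝ => m * Real.exp (-α * s ^ 2) - m * e := by fun_prop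
      have hlim := hct.tendsto r
      have hev : ∀ᶠ s in nhds r, m * Real.exp (-α * s ^ 2) - m * e < w p - u p := by
        apply hlim.eventually_lt_const
        simp only [← he, sub_self]; linarith
      have hev2 : ∀ᶠ s in nhdsWithin r (Iio r), m * Real.exp (-α * s ^ 2) - m * e < w p - u p :=
        nhdsWithin_le_nhds hev
      have hev3 : ∀ᶠ s in nhdsWithin r (Iio r), s ∈ Ioo (dist p y) r :=
        Ioo_mem_nhdsLT (mem_ball.1 hp)
      obtain ⟨s, hs1, hs2⟩ := (hev2.and hev3).exists
      exact ⟨s, hs2.1.le, hs2.2, dist_nonneg.trans hs2.1.le, hs1⟩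
    obtain ⟨s, hps, hsr, hs0, hsw⟩ := hrad
    have hsub : closedBall y s ⊆ Ω := (closedBall_subset_ball hsr).trans hy
    have hl : LowerSemicontinuousOn (fun x => u x + -w x) (closedBall y s) :=
      (hlsc.mono hsub).add (hwc.neg.lowerSemicontinuous.lowerSemicontinuousOn _)
    obtain ⟨q, hq, hmin⟩ := LowerSemicontinuousOn.exists_isMinOn ⟨p, mem_closedBall.2 hps⟩
      (isCompact_closedBall y s) hl
    have hqp : u q + -w q ≤ u p + -w p := hmin (mem_closedBall.2 hps)
    have hqΩ := hsub hq
    have hwq : w q = m * Real.exp (-α * ‖q - y‖ ^ 2) - m * e := by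
      rw [hw, barr]; ring
    have hu0 := hnn q hqΩ
    have hme : 0 < m * e := by positivity
    have hqd : dist q y = ‖q - y‖ := dist_eq_norm _ _
    have hqs : ‖q - y‖ < s := by
      rcases lt_or_eq_of_le (mem_closedBall.1 hq) with h | h
      · rwa [hqd] at h
      · rw [hqd] at h; rw [h] at hwq; linarith
    have hqρ : ρ ≤ ‖q - y‖ := by
      by_contra hc
      push Not at hc
      have := hin q (by rw [mem_ball, hqd]; exact hc)
      have h2 : Real.exp (-α * ‖q - y‖ ^ 2) ≤ 1 := Real.exp_le_one_iff.2 (by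
        have : 0 ≤ α * ‖q - y‖ ^ 2 := by positivity
        linarith)
      have h3 : m * Real.exp (-α * ‖q - y‖ ^ 2) ≤ m * 1 := by gcongr
      linarith
    have hball : closedBall y s ∈ nhds q :=
      Filter.mem_of_superset (isOpen_ball.mem_nhds (by rw [mem_ball, hqd]; exact hqs))
        ball_subset_closedBall
    set k := -(m * e) + (u q - w q) with hk
    have hφ : ∀ x, barr y m α k x = w x + (u q - w q) := fun x => by
      rw [hw, barr, barr, hk]; ring
    have hv := hvis (barr y m α k) (barr_contDiff y m α k).contDiffOn q hqΩ (by rw [hφ]; ring) (by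
      refine IsLocalMin.on ?_ _
      filter_upwards [hball] with x hx
      have : u q + -w q ≤ u x + -w x := hmin hx
      simp only [hφ]
      linarith)
    have hsq : u q ≤ m * Real.exp (-α * ‖q - y‖ ^ 2) := by linarith
    have h5 := barr_linOp hn hlam hLam hE y q hqΩ (k := k) (r := r) hm hα hρ h1 hqρ (by linarith) hu0 hsq
    have h6 : barr y m α k q = u q := by rw [hφ]; ring
    rw [h6] at hv
    have h7 : e ≤ Real.exp (-α * ‖q - y‖ ^ 2) := by
      rw [he]; apply Real.exp_le_exp.2
      have : ‖q - y‖ ^ 2 ≤ r ^ 2 := by gcongr; linarith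
      nlinarith
    have h8 : m * e ≤ m * Real.exp (-α * ‖q - y‖ ^ 2) := by gcongr
    linarith
  intro x hx
  refine le_trans ?_ (key x hx)
  have hd : dist x y < r := hx
  have hd0 : 0 ≤ dist x y := dist_nonneg
  rw [barr, ← dist_eq_norm]
  have h2 : Real.exp (-α * dist x y ^ 2) = e * Real.exp (α * (r ^ 2 - dist x y ^ 2)) := by
    rw [he, ← Real.exp_add]; congr 1; ring
  have h3 := Real.add_one_le_exp (α * (r ^ 2 - dist x y ^ 2))
  have h4 : r * (r - dist x y) ≤ r ^ 2 - dist x y ^ 2 := by nlinarith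
  have h5 : α * (r * (r - dist x y)) ≤ Real.exp (α * (r ^ 2 - dist x y ^ 2)) - 1 := by
    have : α * (r * (r - dist x y)) ≤ α * (r ^ 2 - dist x y ^ 2) := by gcongr
    linarith
  have h6 : m * e * (α * (r * (r - dist x y))) ≤
      m * e * (Real.exp (α * (r ^ 2 - dist x y ^ 2)) - 1) := by gcongr
  rw [h2]
  linarith

/-- interior positivity: local statement on a compact set, for a fixed starting ball -/
lemma interior_pos {n : ℕ} (hn : 0 < n) {Ω : Set (En n)} (hΩopen : IsOpen Ω)
    (hΩconn : IsConnected Ω) {lam Lam : ℝ} (hlam : 0 < lam)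
    (hLam : 0 < Lam) (x₁ : En n) {d : ℝ} (hd : 0 < d) (hx₁ : x₁ ∈ Ω) (y : En n) (hy : y ∈ Ω) :
    ∃ V ∈ nhds y, ∃ ε > (0 : ℝ), ∃ m > (0 : ℝ), ∀ u, Cls Ω lam Lam ε u →
      (∀ x ∈ ball x₁ d, 1 ≤ u x) → ∀ x ∈ V, m ≤ u x := by
  set S : Set (En n) := {y | ∃ V ∈ nhds y, ∃ ε > (0 : ℝ), ∃ m > (0 : ℝ), ∀ u, Cls Ω lam Lam ε u →
      (∀ x ∈ ball x₁ d, 1 ≤ u x) → ∀ x ∈ V, m ≤ u x} with hS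
  have hSo : IsOpen S := by
    rw [isOpen_iff_mem_nhds]
    rintro y ⟨V, hV, h⟩
    filter_upwards [eventually_mem_nhds_iff.2 hV] with z hz
    exact ⟨V, hz, h⟩
  have hsub : Ω ⊆ S := by
    refine hΩconn.isPreconnected.subset_of_closure_inter_subset hSo ⟨x₁, hx₁, ?_⟩ ?_
    · exact ⟨ball x₁ d, ball_mem_nhds _ hd, 1, one_pos, 1, one_pos, fun u _ h => h⟩
    · rintro y ⟨hyc, hyΩ⟩
      obtain ⟨R, hR, hRΩ⟩ := Metric.isOpen_iff.1 hΩopen y hyΩ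
      obtain ⟨y', ⟨V, hV, ε, hε, m, hm, h⟩, hyy⟩ := Metric.mem_closure_iff.1 hyc (R / 4) (by positivity)
      obtain ⟨ρ, hρ, hρV⟩ := Metric.mem_nhds_iff.1 hV
      obtain ⟨κ, hκ, μ, hμ, hb⟩ := hopf_ball hn (Ω := Ω) hlam hLam hρ (half_pos hR)
      have hballs : ball y' (R / 2) ⊆ Ω := by
        refine (ball_subset_ball' ?_).trans hRΩ
        rw [dist_comm]; linarith
      refine ⟨ball y (R / 8), ball_mem_nhds _ (by positivity), min ε (m * κ),
        lt_min hε (by positivity), m * μ * (R / 8), by positivity, ?_⟩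
      intro u hu h1 x hx
      have hxy : dist x y' < R / 4 + R / 8 := by
        have := dist_triangle x y y'
        have := mem_ball.1 hx
        linarith
      have h2 := hb y' hballs m hm u (hu.mono (min_le_right _ _))
        (fun x hx => h u (hu.mono (min_le_left _ _)) h1 x (hρV hx)) x (by
          rw [mem_ball]; linarith)
      refine le_trans ?_ h2
      gcongr
      linarith
  exact hsub hy

lemma compact_pos {n : ℕ} (hn : 0 < n) {Ω : Set (En n)} (hΩopen : IsOpen Ω)
    (hΩconn : IsConnected Ω) {lam Lam : ℝ} (hlam : 0 < lam)
    (hLam : 0 < Lam) (x₁ : En n) {d : ℝ} (hd : 0 < d) (hx₁ : x₁ ∈ Ω) (K : Set (En n))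
    (hK : IsCompact K) (hKΩ : K ⊆ Ω) :
    ∃ ε > (0 : ℝ), ∃ m > (0 : ℝ), ∀ u, Cls Ω lam Lam ε u →
      (∀ x ∈ ball x₁ d, 1 ≤ u x) → ∀ x ∈ K, m ≤ u x := by
  refine hK.induction_on (p := fun K => ∃ ε > (0 : ℝ), ∃ m > (0 : ℝ), ∀ u, Cls Ω lam Lam ε u →
      (∀ x ∈ ball x₁ d, 1 ≤ u x) → ∀ x ∈ K, m ≤ u x) ?_ ?_ ?_ ?_
  · exact ⟨1, one_pos, 1, one_pos, by simp⟩
  · rintro s t hst ⟨ε, hε, m, hm, h⟩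
    exact ⟨ε, hε, m, hm, fun u h1 h2 x hx => h u h1 h2 x (hst hx)⟩
  · rintro s t ⟨ε, hε, m, hm, h⟩ ⟨ε', hε', m', hm', h'⟩
    refine ⟨min ε ε', lt_min hε hε', min m m', lt_min hm hm', ?_⟩
    rintro u h1 h2 x (hx | hx)
    · exact (min_le_left _ _).trans (h u (h1.mono (min_le_left _ _)) h2 x hx)
    · exact (min_le_right _ _).trans (h' u (h1.mono (min_le_right _ _)) h2 x hx)
  · intro y hy
    obtain ⟨V, hV, h⟩ := interior_pos hn hΩopen hΩconn hlam hLam x₁ hd hx₁ y (hKΩ hy)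
    exact ⟨V, mem_nhdsWithin_of_mem_nhds hV, h⟩

/-- first order condition -/
lemma grad_dir {n : ℕ} (p e : En n) (he : ‖e‖ = 1)
    (h : ∀ v : En n, 0 < inner ℝ v e → inner ℝ p v ≤ (0 : ℝ)) :
    inner ℝ p e = -‖p‖ ∧ p = -‖p‖ • e := by
  have hee : inner ℝ e e = (1 : ℝ) := by rw [real_inner_self_eq_norm_sq, he]; norm_num
  have h1 : inner ℝ p e ≤ (0 : ℝ) := h e (by rw [hee]; norm_num)
  set t := inner ℝ p e with ht
  have h2 : ‖p‖ ^ 2 - t ^ 2 ≤ 0 := by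
    have h3 : ∀ τ > 0, ‖p‖ ^ 2 - t ^ 2 + τ * t ≤ 0 := by
      intro τ hτ
      have := h (p - t • e + τ • e) (by
        rw [inner_add_left, inner_sub_left, real_inner_smul_left, real_inner_smul_left, hee, ← ht]
        linarith)
      rw [inner_add_right, inner_sub_right, real_inner_smul_right, real_inner_smul_right, ← ht,
        real_inner_self_eq_norm_sq] at this
      linarith
    have hlim : Filter.Tendsto (fun τ : ℝ => ‖p‖ ^ 2 - t ^ 2 + τ * t) (nhdsWithin 0 (Ioi 0))
        (nhds (‖p‖ ^ 2 - t ^ 2 + 0 * t)) := by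
      apply Filter.Tendsto.mono_left _ nhdsWithin_le_nhds
      apply Continuous.tendsto
      fun_prop
    rw [zero_mul, add_zero] at hlim
    refine le_of_tendsto hlim ?_
    filter_upwards [self_mem_nhdsWithin] with τ hτ
    exact h3 τ hτ
  have h4 : t = -‖p‖ := by
    have := norm_nonneg p
    have h5 : ‖p‖ ≤ -t := by
      apply le_of_sq_le_sq _ (by linarith)
      linarith [neg_sq t]
    have h6 := abs_real_inner_le_norm p e
    rw [he, mul_one, ← ht] at h6
    have := neg_abs_le t
    linarith
  refine ⟨h4, ?_⟩
  have h5 : ‖p - (-‖p‖) • e‖ ^ 2 = 0 := by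
    rw [norm_sub_sq_real, real_inner_smul_right, ← ht, h4, norm_smul, he]
    simp; ring
  have h6 : ‖p - (-‖p‖) • e‖ = 0 := by
    exact pow_eq_zero_iff (two_ne_zero) |>.1 h5
  exact sub_eq_zero.1 (norm_eq_zero.1 h6)

lemma ball_sub_of_frontier {n : ℕ} {Ω : Set (En n)} (hΩopen : IsOpen Ω) {x : En n} (hx : x ∈ Ω)
    (d : ℝ) (hd : 0 < d) (h : d ≤ infDist x (frontier Ω)) : ball x d ⊆ Ω := by
  have hb : IsPreconnected (ball x d) := (convex_ball x d).isPreconnected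
  refine hb.subset_of_closure_inter_subset hΩopen ⟨x, mem_ball_self hd, hx⟩ ?_
  rintro y ⟨hy1, hy2⟩
  by_contra hy
  have : y ∈ frontier Ω := ⟨hy1, by rwa [hΩopen.interior_eq]⟩
  have := infDist_le_dist_of_mem (x := x) this
  rw [mem_ball, dist_comm] at hy2
  linarith

/-- local uniform interior ball condition -/
lemma interior_ball {n : ℕ} {Ω : Set (En n)} (hΩopen : IsOpen Ω) (hC : HasC2Boundary Ω)
    (z₀ : En n) (hz₀ : z₀ ∈ frontier Ω) :
    ∃ r > (0 : ℝ), ∀ x ∈ Ω, x ∈ ball z₀ r → ∃ y, ball y r ⊆ Ω ∧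
      dist x y < r ∧ infDist x (frontier Ω) ≤ r - dist x y := by
  obtain ⟨U, ρ, hUo, hzU, hρ, hΩU, hfU, hgrad⟩ := hC z₀ hz₀
  have hcd : ContDiffAt ℝ 2 ρ z₀ := hρ.contDiffAt (hUo.mem_nhds hzU)
  have hfd : ContDiffAt ℝ 1 (fderiv ℝ ρ) z₀ := hcd.fderiv_right (by norm_num)
  obtain ⟨M, T, hT, hlip⟩ := hfd.exists_lipschitzOnWith
  have hg0 : fderiv ℝ ρ z₀ ≠ 0 := by
    intro h0
    apply hgrad z₀ ⟨hz₀, hzU⟩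
    rw [gradient, h0, map_zero]
  set g := ‖fderiv ℝ ρ z₀‖ / 2 with hg
  have hgpos : 0 < g := by have := norm_pos_iff.2 hg0; positivity
  have hev : ∀ᶠ z in nhds z₀, g < ‖fderiv ℝ ρ z‖ := by
    have : Filter.Tendsto (fun z => ‖fderiv ℝ ρ z‖) (nhds z₀) (nhds ‖fderiv ℝ ρ z₀‖) :=
      hfd.continuousAt.norm
    exact this.eventually_const_lt (by rw [hg]; linarith)
  obtain ⟨s, hs, hsub⟩ := Metric.mem_nhds_iff.1
    (Filter.inter_mem (Filter.inter_mem (hUo.mem_nhds hzU) hT) hev)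
  -- radius
  have hM1 : (0 : ℝ) < M + 1 := by positivity
  set r := min (s / 4) (g / (2 * (M + 1))) with hr
  have hr0 : 0 < r := lt_min (by positivity) (by positivity)
  have hrs : r ≤ s / 4 := min_le_left _ _
  have hrg : r * (2 * (M + 1)) ≤ g := by
    have : r ≤ g / (2 * (M + 1)) := min_le_right _ _
    rwa [le_div_iff₀ (by positivity)] at this
  refine ⟨r, hr0, fun x hx hxr => ?_⟩
  obtain ⟨z, hzf, hzd⟩ := isClosed_frontier.exists_infDist_eq_dist ⟨z₀, hz₀⟩ x
  set d := dist x z with hd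
  have hxz : x ≠ z := by
    rintro rfl
    rw [hΩopen.frontier_eq] at hzf
    exact hzf.2 hx
  have hd0 : 0 < d := dist_pos.2 hxz
  have hdr : d < r := by
    have := infDist_le_dist_of_mem (x := x) hz₀
    rw [hzd] at this
    exact this.trans_lt hxr
  have hzz : dist z z₀ < 2 * r := by
    have := dist_triangle z x z₀
    rw [dist_comm z x] at this
    have := mem_ball.1 hxr
    linarith
  have hzs : z ∈ ball z₀ s := by rw [mem_ball]; linarith
  have hzU' : z ∈ U := (hsub hzs).1.1
  have hρz : ρ z = 0 := by
    have : z ∈ frontier Ω ∩ U := ⟨hzf, hzU'⟩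
    rw [hfU] at this; exact this.2
  have hbx : ball x d ⊆ Ω := ball_sub_of_frontier hΩopen hx d hd0 hzd.ge
  have hdiff : ∀ w ∈ ball z₀ s, DifferentiableAt ℝ ρ w := fun w hw =>
    (hρ.contDiffAt (hUo.mem_nhds (hsub hw).1.1)).differentiableAt (by norm_num)
  set e : En n := d⁻¹ • (x - z) with he
  have hxe : x - z = d • e := by rw [he, smul_smul, mul_inv_cancel₀ hd0.ne', one_smul]
  have hen : ‖e‖ = 1 := by
    rw [he, norm_smul, ← dist_eq_norm, ← hd, norm_inv, Real.norm_of_nonneg hd0.le,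
      inv_mul_cancel₀ hd0.ne']
  set p := gradient ρ z with hp
  have hpn : ‖p‖ = ‖fderiv ℝ ρ z‖ := by rw [hp, gradient, LinearIsometryEquiv.norm_map]
  have hpg : g < ‖p‖ := by rw [hpn]; exact (hsub hzs).2
  have hdir := grad_dir p e hen (by
    intro v hv
    by_contra hcon
    push Not at hcon
    rw [hp, inner_gradient_left] at hcon
    -- derivative along v
    have hder : HasDerivAt (fun t : ℝ => ρ (z + t • v)) (fderiv ℝ ρ z v) 0 := by
      have h1 : HasFDerivAt ρ (fderiv ℝ ρ z) (z + (0 : ℝ) • v) := by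
        rw [zero_smul, add_zero]; exact (hdiff z hzs).hasFDerivAt
      have h2 : HasDerivAt (fun t : ℝ => z + t • v) v 0 := by
        simpa using ((hasDerivAt_id (0 : ℝ)).smul_const v).const_add z
      exact h1.comp_hasDerivAt 0 h2
    have hpos : ∀ᶠ t in nhdsWithin (0 : ℝ) (Ioi 0), 0 < ρ (z + t • v) := by
      have hsl := hder.tendsto_slope
      have h3 : ∀ᶠ t in nhdsWithin (0 : ℝ) {0}ᶜ,
          0 < slope (fun t : ℝ => ρ (z + t • v)) 0 t := hsl.eventually_const_lt hcon
      have h4 := h3.filter_mono (nhdsWithin_mono (0 : ℝ)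
        (fun t (ht : t ∈ Ioi (0 : ℝ)) => (ne_of_gt ht : t ≠ 0)))
      filter_upwards [h4, self_mem_nhdsWithin] with t ht ht0
      have ht0' : (0 : ℝ) < t := ht0
      rw [slope_def_field] at ht
      simp only [zero_smul, add_zero, hρz, sub_zero] at ht
      exact (div_pos_iff_of_pos_right ht0').1 ht
    have hin : ∀ᶠ t in nhdsWithin (0 : ℝ) (Ioi 0), z + t • v ∈ ball x d := by
      have h5 : ∀ᶠ t in nhdsWithin (0 : ℝ) (Ioi 0), t * ‖v‖ ^ 2 < 2 * (d * inner ℝ v e) := by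
        apply Filter.Eventually.filter_mono nhdsWithin_le_nhds
        have : Continuous fun t : ℝ => t * ‖v‖ ^ 2 := by fun_prop
        refine (this.tendsto 0).eventually_lt_const ?_
        rw [zero_mul]; positivity
      filter_upwards [h5, self_mem_nhdsWithin] with t ht ht0
      have ht0' : (0 : ℝ) < t := ht0
      rw [mem_ball, dist_eq_norm]
      have e1 : z + t • v - x = t • v - d • e := by rw [← hxe]; abel
      rw [e1]
      apply lt_of_pow_lt_pow_left₀ 2 hd0.le
      rw [norm_sub_sq_real, norm_smul, norm_smul, hen, real_inner_smul_left, real_inner_smul_right,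
        mul_pow, mul_one, Real.norm_eq_abs, Real.norm_eq_abs, sq_abs, sq_abs]
      nlinarith
    have hU : ∀ᶠ t in nhdsWithin (0 : ℝ) (Ioi 0), z + t • v ∈ U := by
      apply Filter.Eventually.filter_mono nhdsWithin_le_nhds
      have : Continuous fun t : ℝ => z + t • v := by fun_prop
      refine (this.tendsto 0).eventually (hUo.mem_nhds ?_)
      rw [zero_smul, add_zero]; exact hzU'
    obtain ⟨t, ⟨ht1, ht2⟩, ht3⟩ := ((hpos.and hin).and hU).exists
    have : z + t • v ∈ Ω ∩ U := ⟨hbx ht2, ht3⟩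
    rw [hΩU] at this
    exact absurd this.2 (not_lt.2 ht1.le))
  obtain ⟨-, hpe⟩ := hdir
  refine ⟨z + r • e, ?_, ?_⟩
  · intro y hy
    have hyz : dist y z < 2 * r := by
      have h1 := dist_triangle y (z + r • e) z
      have h2 : dist (z + r • e) z = r := by
        rw [dist_eq_norm, add_sub_cancel_left, norm_smul, hen, Real.norm_of_nonneg hr0.le, mul_one]
      have := mem_ball.1 hy
      linarith
    have hys : closedBall z (dist y z) ⊆ ball z₀ s := by
      intro w hw
      have := dist_triangle w z z₀
      have := mem_closedBall.1 hw
      rw [mem_ball]; linarith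
    have hyU : y ∈ U := (hsub (hys (mem_closedBall.2 le_rfl))).1.1
    have htay := (convex_closedBall z (dist y z)).norm_image_sub_le_of_norm_fderiv_le'
      (f := ρ) (φ := fderiv ℝ ρ z) (C := M * dist y z) (x := z) (y := y) (𝕜 := ℝ)
      (fun w hw => hdiff w (hys hw)) (fun w hw => by
        rw [← dist_eq_norm]
        refine (hlip.dist_le_mul w (hsub (hys hw)).1.2 z (hsub hzs).1.2).trans ?_
        have := mem_closedBall.1 hw
        gcongr) (mem_closedBall_self dist_nonneg) (mem_closedBall.2 le_rfl)
    rw [hρz, sub_zero, ← inner_gradient_left, ← hp, hpe, real_inner_smul_left, Real.norm_eq_abs,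
      dist_eq_norm] at htay
    have h1 := (le_abs_self _).trans htay
    have h2 : ‖y - z‖ ^ 2 < 2 * r * inner ℝ e (y - z) := by
      have h3 : ‖(y - z) - r • e‖ < r := by
        have := mem_ball.1 hy
        rwa [dist_eq_norm, ← sub_sub] at this
      have h4 : ‖(y - z) - r • e‖ ^ 2 < r ^ 2 := by gcongr
      rw [norm_sub_sq_real, real_inner_smul_right, norm_smul, hen, mul_one, Real.norm_eq_abs,
        sq_abs, real_inner_comm] at h4
      linarith
    set I := inner ℝ e (y - z) with hI
    have hI0 : 0 < I := by
      by_contra hc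
      push Not at hc
      have : 2 * r * I ≤ 0 := mul_nonpos_of_nonneg_of_nonpos (by positivity) hc
      have := sq_nonneg ‖y - z‖
      linarith
    have h5 : (M : ℝ) * ‖y - z‖ ^ 2 ≤ (M + 1) * (2 * r * I) := by
      have : (0 : ℝ) ≤ M := M.2
      apply mul_le_mul (by linarith) h2.le (by positivity) (by positivity)
    have h6 : r * (2 * (M + 1)) * I ≤ g * I := by gcongr
    have h7 : g * I < ‖p‖ * I := by gcongr
    have : ρ y < 0 := by
      have e1 : (M : ℝ) * ‖y - z‖ * ‖y - z‖ = M * ‖y - z‖ ^ 2 := by ring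
      linarith
    have : y ∈ {y ∈ U | ρ y < 0} := ⟨hyU, this⟩
    rw [← hΩU] at this
    exact this.1
  · have h1 : dist x (z + r • e) = r - d := by
      rw [dist_eq_norm, ← sub_sub, hxe, ← sub_smul, norm_smul, hen, mul_one, Real.norm_eq_abs,
        abs_of_nonpos (by linarith)]
      ring
    rw [h1, hzd]
    exact ⟨by linarith, by linarith⟩

lemma isCompact_inner {n : ℕ} {Ω : Set (En n)} (hΩbdd : Bornology.IsBounded Ω) (hne : (Ωᶜ).Nonempty)
    {s : ℝ} (hs : 0 < s) : IsCompact {y : En n | ball y s ⊆ Ω} ∧ {y : En n | ball y s ⊆ Ω} ⊆ Ω := by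
  have hsub : {y : En n | ball y s ⊆ Ω} ⊆ Ω := fun y hy => hy (mem_ball_self hs)
  refine ⟨?_, hsub⟩
  have heq : {y : En n | ball y s ⊆ Ω} = {y | s ≤ infDist y Ωᶜ} := by
    ext y
    simp only [mem_setOf_eq]
    rw [le_infDist hne]
    constructor
    · intro h z hz
      by_contra hc
      push Not at hc
      exact hz (h (by rwa [mem_ball, dist_comm]))
    · intro h z hz
      by_contra hc
      have := h hc
      rw [mem_ball, dist_comm] at hz
      linarith
  refine Metric.isCompact_of_isClosed_isBounded ?_ (hΩbdd.subset hsub)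
  rw [heq]
  exact isClosed_le continuous_const (continuous_infDist_pt _)

lemma fixed_start {n : ℕ} (hn : 0 < n) {Ω : Set (En n)} (hΩopen : IsOpen Ω)
    (hΩconn : IsConnected Ω) (hΩbdd : Bornology.IsBounded Ω) (hΩC2 : HasC2Boundary Ω)
    (hne : (Ωᶜ).Nonempty) {lam Lam : ℝ} (hlam : 0 < lam)
    (hLam : 0 < Lam) (x₁ : En n) {d : ℝ} (hd : 0 < d) (hx₁ : x₁ ∈ Ω) :
    ∃ ε > (0 : ℝ), ∃ μ > (0 : ℝ), ∀ u, Cls Ω lam Lam ε u →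
      (∀ x ∈ ball x₁ d, 1 ≤ u x) → ∀ x ∈ closure Ω, x ∈ Ω → μ * infDist x (frontier Ω) ≤ u x := by
  refine hΩbdd.isCompact_closure.induction_on (p := fun K => ∃ ε > (0 : ℝ), ∃ μ > (0 : ℝ), ∀ u,
    Cls Ω lam Lam ε u → (∀ x ∈ ball x₁ d, 1 ≤ u x) → ∀ x ∈ K, x ∈ Ω →
      μ * infDist x (frontier Ω) ≤ u x) ?_ ?_ ?_ ?_
  · exact ⟨1, one_pos, 1, one_pos, by simp⟩
  · rintro s t hst ⟨ε, hε, m, hm, h⟩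
    exact ⟨ε, hε, m, hm, fun u h1 h2 x hx => h u h1 h2 x (hst hx)⟩
  · rintro s t ⟨ε, hε, m, hm, h⟩ ⟨ε', hε', m', hm', h'⟩
    refine ⟨min ε ε', lt_min hε hε', min m m', lt_min hm hm', ?_⟩
    rintro u h1 h2 x (hx | hx) hxΩ
    · exact (mul_le_mul_of_nonneg_right (min_le_left _ _) infDist_nonneg).trans
        (h u (h1.mono (min_le_left _ _)) h2 x hx hxΩ)
    · exact (mul_le_mul_of_nonneg_right (min_le_right _ _) infDist_nonneg).trans
        (h' u (h1.mono (min_le_right _ _)) h2 x hx hxΩ)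
  · intro y hy
    by_cases hyΩ : y ∈ Ω
    · obtain ⟨V, hV, ε, hε, m, hm, h⟩ :=
        interior_pos hn hΩopen hΩconn hlam hLam x₁ hd hx₁ y hyΩ
      set D := infDist y (frontier Ω) + 1 with hD
      have hD0 : 0 < D := by have : 0 ≤ infDist y (frontier Ω) := infDist_nonneg; linarith
      refine ⟨V ∩ ball y 1, mem_nhdsWithin_of_mem_nhds
        (Filter.inter_mem hV (ball_mem_nhds _ one_pos)), ε, hε, m / D, by positivity, ?_⟩
      intro u h1 h2 x hx _
      refine le_trans ?_ (h u h1 h2 x hx.1)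
      have h3 : infDist x (frontier Ω) ≤ D := by
        have := infDist_le_infDist_add_dist (s := frontier Ω) (x := x) (y := y)
        have := mem_ball.1 hx.2
        linarith
      calc m / D * infDist x (frontier Ω) ≤ m / D * D := by gcongr
        _ = m := by field_simp
    · have hyf : y ∈ frontier Ω := ⟨hy, by rwa [hΩopen.interior_eq]⟩
      obtain ⟨r, hr, hball⟩ := interior_ball hΩopen hΩC2 y hyf
      obtain ⟨hKc, hKΩ⟩ := isCompact_inner hΩbdd hne (half_pos hr)
      obtain ⟨ε, hε, m, hm, h⟩ :=
        compact_pos hn hΩopen hΩconn hlam hLam x₁ hd hx₁ _ hKc hKΩ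
      obtain ⟨κ, hκ, μ, hμ, hb⟩ := hopf_ball hn (Ω := Ω) hlam hLam (half_pos hr) hr
      refine ⟨ball y r, mem_nhdsWithin_of_mem_nhds (ball_mem_nhds _ hr), min ε (m * κ),
        lt_min hε (by positivity), m * μ, by positivity, ?_⟩
      intro u h1 h2 x hx hxΩ
      obtain ⟨yc, hyc, hxy, hxd⟩ := hball x hxΩ hx
      have h3 := hb yc hyc m hm u (h1.mono (min_le_right _ _)) (fun w hw =>
        h u (h1.mono (min_le_left _ _)) h2 w (by
          refine (ball_subset_ball' ?_).trans hyc
          have := mem_ball.1 hw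
          linarith)) x hxy
      refine le_trans ?_ h3
      gcongr

/-- **Lemma 1.2 (strengthened Hopf lemma).** In a bounded `C²` domain `Ω`, there are
constants `εb, μb > 0` depending only on `n, λ, Λ, δ, Ω` such that every nonnegative
viscosity supersolution of `Lu ≤ εb` which is `≥ 1` on some ball of radius `δ` contained
in `Ω` satisfies `u(x) ≥ μb · dist(x, ∂Ω)`. -/
theorem strengthened_hopf_lemma
    {n : ℕ} (lam Lam : ℝ) (hlam : 0 < lam) (hLam : 0 < Lam)
    (Ω : Set (En n)) (hΩopen : IsOpen Ω) (hΩconn : IsConnected Ω)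
    (hΩbdd : Bornology.IsBounded Ω) (hΩC2 : HasC2Boundary Ω)
    (δ : ℝ) (hδ : 0 < δ) :
    ∃ εb > (0 : ℝ), ∃ μb > (0 : ℝ),
      ∀ x₀ : En n, Metric.ball x₀ δ ⊆ Ω →
      ∀ (a : En n → Matrix (Fin n) (Fin n) ℝ) (b : En n → En n) (c : En n → ℝ),
        EllipticCoeffs Ω a b c lam Lam →
      ∀ u : En n → ℝ, LowerSemicontinuousOn u Ω →
        IsViscositySupersolution (linOp a b c) (fun _ => εb) Ω u →
        (∀ x ∈ Ω, 0 ≤ u x) →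
        (∀ x ∈ Metric.ball x₀ δ, 1 ≤ u x) →
        ∀ x ∈ Ω, μb * Metric.infDist x (frontier Ω) ≤ u x := by
  rcases Nat.eq_zero_or_pos n with hn | hn
  · subst hn
    refine ⟨1, one_pos, 1, one_pos, ?_⟩
    intro x₀ _ a b c _ u _ _ hnn _ x hx
    have hf : frontier Ω = ∅ := by
      rw [Subsingleton.eq_univ_of_nonempty hΩconn.nonempty, frontier_univ]
    rw [hf, infDist_empty, mul_zero]
    exact hnn x hx
  have hne : (Ωᶜ).Nonempty := by
    rw [nonempty_compl]
    intro h
    haveI : Nonempty (Fin n) := ⟨⟨0, hn⟩⟩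
    rw [h] at hΩbdd
    exact NormedSpace.unbounded_univ ℝ (En n) hΩbdd
  obtain ⟨hKc, hKΩ⟩ := isCompact_inner hΩbdd hne hδ
  have main : ∃ ε > (0 : ℝ), ∃ μ > (0 : ℝ), ∀ x₀ ∈ {y : En n | ball y δ ⊆ Ω}, ∀ u,
      Cls Ω lam Lam ε u → (∀ x ∈ ball x₀ δ, 1 ≤ u x) →
      ∀ x ∈ Ω, μ * infDist x (frontier Ω) ≤ u x := by
    refine hKc.induction_on (p := fun K => ∃ ε > (0 : ℝ), ∃ μ > (0 : ℝ), ∀ x₀ ∈ K, ∀ u,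
      Cls Ω lam Lam ε u → (∀ x ∈ ball x₀ δ, 1 ≤ u x) →
      ∀ x ∈ Ω, μ * infDist x (frontier Ω) ≤ u x) ?_ ?_ ?_ ?_
    · exact ⟨1, one_pos, 1, one_pos, by simp⟩
    · rintro s t hst ⟨ε, hε, m, hm, h⟩
      exact ⟨ε, hε, m, hm, fun x₀ hx₀ => h x₀ (hst hx₀)⟩
    · rintro s t ⟨ε, hε, m, hm, h⟩ ⟨ε', hε', m', hm', h'⟩
      refine ⟨min ε ε', lt_min hε hε', min m m', lt_min hm hm', ?_⟩
      rintro x₀ (hx₀ | hx₀) u h1 h2 x hx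
      · exact (mul_le_mul_of_nonneg_right (min_le_left _ _) infDist_nonneg).trans
          (h x₀ hx₀ u (h1.mono (min_le_left _ _)) h2 x hx)
      · exact (mul_le_mul_of_nonneg_right (min_le_right _ _) infDist_nonneg).trans
          (h' x₀ hx₀ u (h1.mono (min_le_right _ _)) h2 x hx)
    · intro x₁ hx₁
      obtain ⟨ε, hε, μ, hμ, h⟩ := fixed_start hn hΩopen hΩconn hΩbdd hΩC2 hne hlam hLam x₁
        (half_pos hδ) (hKΩ hx₁)
      refine ⟨ball x₁ (δ / 2), mem_nhdsWithin_of_mem_nhds (ball_mem_nhds _ (half_pos hδ)),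
        ε, hε, μ, hμ, ?_⟩
      intro x₀ hx₀ u h1 h2 x hx
      refine h u h1 (fun w hw => h2 w ?_) x (subset_closure hx) hx
      rw [mem_ball] at *
      have := dist_triangle w x₁ x₀
      rw [dist_comm x₁ x₀] at this
      linarith
  obtain ⟨ε, hε, μ, hμ, h⟩ := main
  refine ⟨ε, hε, μ, hμ, ?_⟩
  intro x₀ hx₀ a b c hE u hlsc hv hnn h1 x hx
  exact h x₀ hx₀ u ⟨a, b, c, hE, hlsc, hv, hnn⟩ h1 x hx
end
end

section
/- Let a_ij, b_i, c ∈ L^∞(B₁) satisfy the uniform ellipticity and boundedness conditions with constants λ, Λ, where B₁ is the open unit ball in ℝⁿ. Then for any 0 < δ < 1 there exist positive constants ε̄ and μ̄, depending only on n, λ, Λ, δ, such that: if u ∈ LSC(B₁) satisfies a_ij(x)∂_ij u + b_i(x)∂_i u + c(x)u ≤ ε̄ in B₁ in the viscosity sense, u ≥ 1 on B_δ (the ball of radius δ centered at 0), and u ≥ 0 in B₁, then u(x) ≥ μ̄ (1 − |x|) for all x ∈ B₁. -/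
open Set Metric

noncomputable section

/-- The exponential barrier, up to an additive constant. -/
def barrier {n : ℕ} (α k : ℝ) (y : En n) : ℝ := Real.exp (-α * ‖y‖ ^ 2) + k

lemma barrier_hasFDerivAt {n : ℕ} (α k : ℝ) (y : En n) :
    HasFDerivAt (barrier (n := n) α k)
      ((Real.exp (-α * ‖y‖ ^ 2) * (-2 * α)) • innerSL ℝ y) y := by
  have h1 : HasFDerivAt (fun y : En n => ‖y‖ ^ 2) (2 • innerSL ℝ y) y :=
    (hasStrictFDerivAt_norm_sq y).hasFDerivAt
  have h2 := ((h1.const_mul (-α)).exp).add_const k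
  refine h2.congr_fderiv ?_
  ext v
  simp
  ring

lemma barrier_contDiff {n : ℕ} (α k : ℝ) : ContDiff ℝ 2 (barrier (n := n) α k) := by
  unfold barrier
  have : ContDiff ℝ 2 (fun y : En n => ‖y‖ ^ 2) := contDiff_norm_sq ℝ
  fun_prop

lemma barrier_gradient {n : ℕ} (α k : ℝ) (y : En n) (i : Fin n) :
    gradient (barrier α k) y i = Real.exp (-α * ‖y‖ ^ 2) * (-2 * α) * y i := by
  have : HasGradientAt (barrier α k) ((Real.exp (-α * ‖y‖ ^ 2) * (-2 * α)) • y) y := by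
    rw [hasGradientAt_iff_hasFDerivAt]
    refine (barrier_hasFDerivAt α k y).congr_fderiv ?_
    ext v
    simp
  rw [this.gradient]
  simp

lemma barrier_hess {n : ℕ} (α k : ℝ) (y : En n) (i j : Fin n) :
    hess (barrier α k) y i j =
      Real.exp (-α * ‖y‖ ^ 2) * (4 * α ^ 2 * (y i * y j) - 2 * α * (if i = j then 1 else 0)) := by
  have e : fderiv ℝ (barrier (n := n) α k) =
      fun y => (Real.exp (-α * ‖y‖ ^ 2) * (-2 * α)) • innerSL ℝ y :=
    funext fun y => (barrier_hasFDerivAt α k y).fderiv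
  have h1 : HasFDerivAt (fun y : En n => Real.exp (-α * ‖y‖ ^ 2) * (-2 * α))
      ((-2 * α) • ((Real.exp (-α * ‖y‖ ^ 2) * (-2 * α)) • innerSL ℝ y)) y := by
    have := (barrier_hasFDerivAt α 0 y).mul_const (-2 * α)
    simpa [barrier] using this
  have h2 := h1.smul (innerSL ℝ (E := En n)).hasFDerivAt
  have h3 : ∀ v w : En n,
      fderiv ℝ (fun y : En n => (Real.exp (-α * ‖y‖ ^ 2) * (-2 * α)) • innerSL ℝ y) y v w =
        (Real.exp (-α * ‖y‖ ^ 2) * (-2 * α)) * inner ℝ v w +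
        ((-2 * α) * ((Real.exp (-α * ‖y‖ ^ 2) * (-2 * α)) * inner ℝ y v)) * inner ℝ y w := by
    intro v w
    exact congrArg (fun T : En n →L[ℝ] En n →L[ℝ] ℝ => T v w) h2.fderiv
  simp only [hess, Matrix.of_apply, iteratedFDeriv_two_apply, e]
  rw [h3]
  by_cases hij : i = j
  · subst hij
    simp [EuclideanSpace.inner_single_right]
    ring
  · simp [hij, EuclideanSpace.inner_single_right]
    ring

lemma barrier_linOp {n : ℕ} (a : En n → Matrix (Fin n) (Fin n) ℝ) (b : En n → En n)
    (c : En n → ℝ) (lam Lam α k : ℝ) (hα : 0 < α) (hLam : 0 < Lam)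
    (hE : EllipticCoeffs (Metric.ball 0 1) a b c lam Lam)
    (hn : 0 < n) (x : En n) (hx : x ∈ Metric.ball (0 : En n) 1) (s : ℝ) (hs : 0 ≤ s)
    (hs' : s ≤ Real.exp (-α * ‖x‖ ^ 2)) :
    Real.exp (-α * ‖x‖ ^ 2) * (4 * α ^ 2 * (lam * ‖x‖ ^ 2) - 4 * α * (n * Lam) - Lam) ≤
      linOp a b c x s (gradient (barrier α k) x) (hess (barrier α k) x) := by
  obtain ⟨h1, h2⟩ := hE
  have hell := h2 x hx x
  have hb := h1 x hx
  have hx1 : ‖x‖ ≤ 1 := by simpa using (mem_ball_zero_iff.1 hx).le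
  set E := Real.exp (-α * ‖x‖ ^ 2) with hEdef
  have hE0 : 0 < E := Real.exp_pos _
  have e1 : (∑ i, ∑ j, a x i j * hess (barrier α k) x i j) =
      E * (4 * α ^ 2 * (∑ i, ∑ j, a x i j * x i * x j) - 2 * α * ∑ i, a x i i) := by
    have : ∀ i, ∑ j, a x i j * hess (barrier α k) x i j =
        E * (4 * α ^ 2 * (∑ j, a x i j * x i * x j) - 2 * α * a x i i) := by
      intro i
      have : a x i i = ∑ j, a x i j * (if i = j then 1 else 0) := by simp
      rw [this, Finset.mul_sum, Finset.mul_sum, ← Finset.sum_sub_distrib, Finset.mul_sum]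
      refine Finset.sum_congr rfl fun j _ => ?_
      rw [barrier_hess]
      ring
    simp_rw [this]
    rw [← Finset.mul_sum, Finset.sum_sub_distrib, Finset.mul_sum, Finset.mul_sum]
  have e2 : (∑ i, b x i * gradient (barrier α k) x i) = E * (-2 * α * ∑ i, b x i * x i) := by
    rw [Finset.mul_sum, Finset.mul_sum]
    refine Finset.sum_congr rfl fun i _ => ?_
    rw [barrier_gradient]
    ring
  have t1 : ∑ i, a x i i ≤ n * Lam := by
    have : ∑ i, a x i i ≤ ∑ _i : Fin n, Lam := Finset.sum_le_sum fun i _ => by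
      have := hb i i
      have := le_abs_self (a x i i)
      have := abs_nonneg (b x i)
      have := abs_nonneg (c x)
      linarith
    simpa using this
  have t2 : ∑ i, b x i * x i ≤ n * Lam := by
    have : ∑ i, b x i * x i ≤ ∑ _i : Fin n, Lam := Finset.sum_le_sum fun i _ => by
      have h3 := hb i i
      have h4 := abs_nonneg (a x i i)
      have h5 := abs_nonneg (c x)
      have h6 : |x i| ≤ 1 := by
        have := PiLp.norm_apply_le x i
        rw [Real.norm_eq_abs] at this
        linarith
      have h7 : |b x i| ≤ Lam := by linarith
      calc b x i * x i ≤ |b x i * x i| := le_abs_self _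
        _ = |b x i| * |x i| := abs_mul _ _
        _ ≤ Lam * 1 := mul_le_mul h7 h6 (abs_nonneg _) hLam.le
        _ = Lam := mul_one _
    simpa using this
  have t3 : -(Lam * E) ≤ c x * s := by
    have h3 := hb ⟨0, hn⟩ ⟨0, hn⟩
    have h4 := abs_nonneg (a x ⟨0, hn⟩ ⟨0, hn⟩)
    have h5 := abs_nonneg (b x ⟨0, hn⟩)
    have h7 : |c x| ≤ Lam := by linarith
    have : |c x * s| ≤ Lam * E := by
      rw [abs_mul, abs_of_nonneg hs]
      exact mul_le_mul h7 hs' hs hLam.le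
    exact (abs_le.1 this).1
  unfold linOp
  rw [e1, e2]
  have t4 : 4 * α ^ 2 * (lam * ‖x‖ ^ 2) - 4 * α * (n * Lam) ≤
      (4 * α ^ 2 * (∑ i, ∑ j, a x i j * x i * x j) - 2 * α * ∑ i, a x i i) +
        (-2 * α * ∑ i, b x i * x i) := by
    have := mul_le_mul_of_nonneg_left hell (by positivity : 0 ≤ 4 * α ^ 2)
    have := mul_le_mul_of_nonneg_left t1 (by positivity : 0 ≤ 2 * α)
    have := mul_le_mul_of_nonneg_left t2 (by positivity : 0 ≤ 2 * α)
    linarith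
  have t5 := mul_le_mul_of_nonneg_left t4 hE0.le
  linarith

/-- **Lemma 1.3 (strengthened Hopf lemma in the unit ball).** There are constants
`εb, μb > 0` depending only on `n, λ, Λ, δ` such that every nonnegative viscosity
supersolution of `Lu ≤ εb` in `B₁` which is `≥ 1` on `B_δ` satisfies
`u(x) ≥ μb (1 - |x|)` in `B₁`. -/
theorem strengthened_hopf_lemma_ball
    {n : ℕ} (lam Lam : ℝ) (hlam : 0 < lam) (hLam : 0 < Lam)
    (δ : ℝ) (hδ₀ : 0 < δ) (hδ₁ : δ < 1) :
    ∃ εb > (0 : ℝ), ∃ μb > (0 : ℝ),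
      ∀ (a : En n → Matrix (Fin n) (Fin n) ℝ) (b : En n → En n) (c : En n → ℝ),
        EllipticCoeffs (Metric.ball 0 1) a b c lam Lam →
      ∀ u : En n → ℝ, LowerSemicontinuousOn u (Metric.ball 0 1) →
        IsViscositySupersolution (linOp a b c) (fun _ => εb) (Metric.ball 0 1) u →
        (∀ x ∈ Metric.ball (0 : En n) δ, 1 ≤ u x) →
        (∀ x ∈ Metric.ball (0 : En n) 1, 0 ≤ u x) →
        ∀ x ∈ Metric.ball (0 : En n) 1, μb * (1 - ‖x‖) ≤ u x := by
  obtain ⟨α, hα, hαb⟩ : ∃ α : ℝ, 0 < α ∧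
      1 ≤ 4 * α ^ 2 * (lam * δ ^ 2) - 4 * α * (n * Lam) - Lam := by
    have hd : 0 < lam * δ ^ 2 := by positivity
    set d := lam * δ ^ 2
    have hN : 0 ≤ (n : ℝ) * Lam := by positivity
    set N := (n : ℝ) * Lam
    refine ⟨(N + Lam + 1) / d + 1, by positivity, ?_⟩
    set α := (N + Lam + 1) / d + 1 with hαd
    have h1 : α * d = N + Lam + 1 + d := by rw [hαd]; field_simp
    have h2 : 1 ≤ α := by rw [hαd]; linarith [show 0 ≤ (N + Lam + 1) / d by positivity]
    have h3 : 4 * α ^ 2 * d = 4 * α * (N + Lam + 1 + d) := by rw [← h1]; ring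
    rw [h3]
    nlinarith [mul_nonneg (sub_nonneg.2 h2) (by positivity : 0 ≤ Lam + 1 + d)]
  refine ⟨Real.exp (-α) / 2, by positivity, min 1 (α * Real.exp (-α)),
    lt_min one_pos (by positivity), ?_⟩
  intro a b c hE u hu hsup hδ hpos
  rcases Nat.eq_zero_or_pos n with hn | hn
  · subst hn
    intro x hx
    have hx0 : x = 0 := Subsingleton.elim _ _
    subst hx0
    have := hδ 0 (by simpa using hδ₀)
    simp only [norm_zero, sub_zero, mul_one]
    exact (min_le_left _ _).trans this
  -- comparison with the barrier
  have key : ∀ x ∈ Metric.ball (0 : En n) 1, barrier α (-Real.exp (-α)) x ≤ u x := by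
    by_contra! hcon
    obtain ⟨x₁, hx₁, hlt⟩ := hcon
    set k := -Real.exp (-α) with hk
    have hcont : Continuous (barrier (n := n) α k) := (barrier_contDiff α k).continuous
    set m := u x₁ - barrier α k x₁ with hm
    have hm0 : m < 0 := by linarith
    -- near the boundary the barrier is small
    obtain ⟨r, hr1, hr⟩ : ∃ r < 1, ∀ x : En n, r < ‖x‖ → barrier α k x < -m := by
      have hc : Continuous fun t : ℝ => Real.exp (-α * t ^ 2) + k := by fun_prop
      have h1 : (fun t : ℝ => Real.exp (-α * t ^ 2) + k) 1 < -m := by simp [hk]; exact hm0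
      have h2 := hc.continuousAt.eventually_lt (continuousAt_const (y := -m)) h1
      obtain ⟨ε, hε, hball⟩ := Metric.eventually_nhds_iff.1 h2
      refine ⟨max 0 (1 - ε / 2), max_lt one_pos (by linarith), fun x hx => ?_⟩
      have hr0 : 0 ≤ max 0 (1 - ε / 2) := le_max_left _ _
      set r := max 0 (1 - ε / 2)
      have h3 : Real.exp (-α * r ^ 2) + k < -m := by
        apply hball
        rw [Real.dist_eq, abs_lt]
        have : 1 - ε / 2 ≤ r := le_max_right _ _
        have : r ≤ 1 := max_le zero_le_one (by linarith)
        constructor <;> linarith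
      have h4 : Real.exp (-α * ‖x‖ ^ 2) ≤ Real.exp (-α * r ^ 2) := by
        apply Real.exp_le_exp.2
        have : r ^ 2 ≤ ‖x‖ ^ 2 := by gcongr
        nlinarith
      unfold barrier
      linarith
    have hsub : Metric.closedBall (0 : En n) r ⊆ Metric.ball 0 1 :=
      Metric.closedBall_subset_ball hr1
    have hx₁r : x₁ ∈ Metric.closedBall (0 : En n) r := by
      rw [mem_closedBall_zero_iff]
      by_contra! h
      have := hr x₁ h
      have := hpos x₁ hx₁
      linarith
    have hlsc : LowerSemicontinuousOn (fun x => u x + (-barrier α k x))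
        (Metric.closedBall (0 : En n) r) :=
      (hu.mono hsub).add (hcont.neg.lowerSemicontinuous.lowerSemicontinuousOn _)
    obtain ⟨x₀, hx₀, hmin⟩ := hlsc.exists_isMinOn ⟨x₁, hx₁r⟩ (isCompact_closedBall _ _)
    have hx₀B := hsub hx₀
    have hle : u x₀ - barrier α k x₀ ≤ m := by
      have := hmin hx₁r
      simp only [Set.mem_ofPred_eq] at this
      linarith
    have hglob : ∀ x ∈ Metric.ball (0 : En n) 1,
        u x₀ - barrier α k x₀ ≤ u x - barrier α k x := by
      intro x hx
      by_cases h : ‖x‖ ≤ r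
      · have := hmin (mem_closedBall_zero_iff.2 h)
        simp only [Set.mem_ofPred_eq] at this
        linarith
      · have := hr x (not_le.1 h)
        have := hpos x hx
        linarith
    have hexp : Real.exp (-α * ‖x₀‖ ^ 2) ≤ 1 := by
      apply Real.exp_le_one_iff.2
      nlinarith [sq_nonneg ‖x₀‖]
    have hbar : barrier α k x₀ = Real.exp (-α * ‖x₀‖ ^ 2) + k := rfl
    have hkneg : k < 0 := by rw [hk]; linarith [Real.exp_pos (-α)]
    have hδx : δ ≤ ‖x₀‖ := by
      by_contra! h
      have := hδ x₀ (mem_ball_zero_iff.2 h)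
      linarith
    set k' := k + (u x₀ - barrier α k x₀) with hk'
    have hbar' : ∀ x : En n, barrier α k' x = barrier α k x + (u x₀ - barrier α k x₀) := by
      intro x
      simp only [hk', barrier]
      ring
    have hφ : u x₀ = barrier α k' x₀ := by rw [hbar']; ring
    have hvisc := hsup (barrier α k') (barrier_contDiff α k').contDiffOn x₀ hx₀B hφ (by
      apply IsMinOn.localize
      intro x hx
      simp only [Set.mem_ofPred_eq]
      rw [hbar' x, hbar' x₀]
      have := hglob x hx
      linarith)
    have hlow := barrier_linOp a b c lam Lam α k' hα hLam hE hn x₀ hx₀B (barrier α k' x₀)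
      (by rw [← hφ]; exact hpos x₀ hx₀B) (by rw [← hφ]; linarith)
    have hx₀1 : ‖x₀‖ < 1 := mem_ball_zero_iff.1 hx₀B
    have hge : Real.exp (-α) ≤ Real.exp (-α * ‖x₀‖ ^ 2) := by
      apply Real.exp_le_exp.2
      have : ‖x₀‖ ^ 2 ≤ 1 := by nlinarith [norm_nonneg x₀]
      nlinarith
    have hbr : 1 ≤ 4 * α ^ 2 * (lam * ‖x₀‖ ^ 2) - 4 * α * (n * Lam) - Lam := by
      have : 4 * α ^ 2 * (lam * δ ^ 2) ≤ 4 * α ^ 2 * (lam * ‖x₀‖ ^ 2) := by gcongr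
      linarith
    have h9 := mul_le_mul_of_nonneg_left hbr (Real.exp_pos (-α * ‖x₀‖ ^ 2)).le
    have := Real.exp_pos (-α)
    simp only [] at hvisc
    linarith
  intro x hx
  refine le_trans ?_ (key x hx)
  have hx1 : ‖x‖ < 1 := mem_ball_zero_iff.1 hx
  have h0 : 0 ≤ ‖x‖ := norm_nonneg x
  have h1 : Real.exp (-α * ‖x‖ ^ 2) = Real.exp (-α) * Real.exp (α * (1 - ‖x‖ ^ 2)) := by
    rw [← Real.exp_add]
    congr 1
    ring
  have h2 := Real.add_one_le_exp (α * (1 - ‖x‖ ^ 2))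
  have h3 : α * (1 - ‖x‖) ≤ Real.exp (α * (1 - ‖x‖ ^ 2)) - 1 := by
    have : ‖x‖ ^ 2 ≤ ‖x‖ := by nlinarith
    nlinarith
  have h4 := mul_le_mul_of_nonneg_left h3 (Real.exp_pos (-α)).le
  have h5 : min 1 (α * Real.exp (-α)) * (1 - ‖x‖) ≤ α * Real.exp (-α) * (1 - ‖x‖) :=
    mul_le_mul_of_nonneg_right (min_le_right _ _) (by linarith)
  unfold barrier
  rw [h1]
  linarith
end
end

section
/- Let n ≥ 1, let Ω ⊂ ℝⁿ be a domain (bounded connected open set), let F ∈ C⁰(Ω × ℝ × ℝⁿ × S^{n×n}) be degenerate elliptic, let E ⊂ Ω be a smooth closed embedded submanifold of dimension k with 0 ≤ k ≤ n − 1, and let f ∈ USC(Ω). Assume u ∈ LSC(Ω) with inf_Ω u > −∞ is lowerconical on E and satisfies F(x, u, ∇u, ∇²u) ≤ f(x) in Ω ∖ E in the viscosity sense. Then F(x, u, ∇u, ∇²u) ≤ f(x) in all of Ω in the viscosity sense. -/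
open Set Metric

noncomputable section

/-- `u` is lowerconical on the subset `E` of `Ω`: for every `η ∈ C^∞(Ω)`, every `xb ∈ E`
and every `ε > 0`, `inf_{x ∈ Ω} ((u+η)(x) - (u+η)(xb) - ε · dist(x, E)) < 0`. -/
def LowerConicalOn {n : ℕ} (Ω : Set (En n)) (u : En n → ℝ) (E : Set (En n)) : Prop :=
  ∀ η : En n → ℝ, ContDiffOn ℝ (⊤ : ℕ∞) η Ω → ∀ xb ∈ E, ∀ ε > 0,
    ∃ x ∈ Ω, (u x + η x) - (u xb + η xb) - ε * Metric.infDist x E < 0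

/-- `E` is a smooth (C^∞) closed (compact, boundaryless) embedded `k`-dimensional
submanifold of ℝⁿ: `E` is compact and near each of its points there is a smooth chart
straightening `E` onto the coordinate subspace `{z : z_i = 0 for i ≥ k}`. -/
def IsSmoothClosedSubmanifold {n : ℕ} (k : ℕ) (E : Set (En n)) : Prop :=
  IsCompact E ∧
  ∀ x ∈ E, ∃ (U V : Set (En n)) (φ ψ : En n → En n),
    IsOpen U ∧ IsOpen V ∧ x ∈ U ∧
    ContDiffOn ℝ (⊤ : ℕ∞) φ U ∧ ContDiffOn ℝ (⊤ : ℕ∞) ψ V ∧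
    Set.MapsTo φ U V ∧ Set.MapsTo ψ V U ∧
    (∀ y ∈ U, ψ (φ y) = y) ∧ (∀ z ∈ V, φ (ψ z) = z) ∧
    φ '' (E ∩ U) = V ∩ {z : En n | ∀ i : Fin n, k ≤ (i : ℕ) → z i = 0}

open Filter Topology

/-- Globally smooth defining function of the submanifold near a point, controlling distance. -/
lemma exists_defining_function {n k : ℕ} {E : Set (En n)} (hE : IsSmoothClosedSubmanifold k E)
    {x₀ : En n} (hx₀ : x₀ ∈ E) :
    ∃ (H : En n → En n) (C : ℝ), ContDiff ℝ 2 H ∧ 0 < C ∧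
      ∀ᶠ y in 𝓝 x₀, infDist y E ≤ C * ‖H y‖ ∧ (y ∈ E → H y = 0) := by
  obtain ⟨U, V, Φ, Ψ, hU, hV, hxU, hΦ, hΨ, hΦm, hΨm, hl, hr, him⟩ := hE.2 x₀ hx₀
  let P₀ : En n →ₗ[ℝ] En n :=
    { toFun := fun z => WithLp.toLp 2 (fun i : Fin n => if k ≤ (i : ℕ) then z i else 0)
      map_add' := by
        intro a b; ext i; by_cases h : k ≤ (i : ℕ) <;> simp [h]
      map_smul' := by
        intro a b; ext i; by_cases h : k ≤ (i : ℕ) <;> simp [h] }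
  let P : En n →L[ℝ] En n := LinearMap.toContinuousLinearMap P₀
  have hP : ∀ z i, P z i = if k ≤ (i : ℕ) then z i else 0 := fun z i => rfl
  have hPE : ∀ y ∈ E, y ∈ U → P (Φ y) = 0 := by
    intro y hy hyU
    have h1 : Φ y ∈ V ∩ {z : En n | ∀ i : Fin n, k ≤ (i : ℕ) → z i = 0} := by
      rw [← him]; exact ⟨y, ⟨hy, hyU⟩, rfl⟩
    ext i
    rw [hP]
    by_cases h : k ≤ (i : ℕ)
    · simp [h, h1.2 i h]
    · simp [h]
  have hUx : U ∈ 𝓝 x₀ := hU.mem_nhds hxU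
  have hVx : V ∈ 𝓝 (Φ x₀) := hV.mem_nhds (hΦm hxU)
  have hΦc : ContinuousAt Φ x₀ := hΦ.continuousOn.continuousAt hUx
  obtain ⟨K, t, ht, hK⟩ := ContDiffAt.exists_lipschitzOnWith (𝕂 := ℝ)
    ((hΨ.contDiffAt hVx).of_le (by exact_mod_cast le_top))
  obtain ⟨R, hR, hRU⟩ := Metric.nhds_basis_closedBall.mem_iff.1 hUx
  let χ : ContDiffBump x₀ := ⟨R / 2, R, by positivity, by linarith⟩
  refine ⟨fun y => χ y • P (Φ y), K + 1, ?_, by positivity, ?_⟩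
  · rw [contDiff_iff_contDiffAt]
    intro y
    by_cases hy : y ∈ U
    · have h2 : ContDiffAt ℝ 2 Φ y :=
        (hΦ.contDiffAt (hU.mem_nhds hy)).of_le (by
          change ((2 : ℕ∞) : WithTop ℕ∞) ≤ ((⊤ : ℕ∞) : WithTop ℕ∞)
          exact_mod_cast le_top)
      exact (χ.contDiff (n := 2)).contDiffAt.smul (P.contDiff.contDiffAt.comp y h2)
    · have h3 : y ∉ tsupport χ := by
        rw [χ.tsupport_eq]; exact fun h => hy (hRU h)
      have h4 := notMem_tsupport_iff_eventuallyEq.1 h3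
      refine (contDiffAt_const (c := (0 : En n))).congr_of_eventuallyEq ?_
      filter_upwards [h4] with z hz
      simp [hz]
  · have hc2 : ContinuousAt (fun y => Φ y - P (Φ y)) x₀ :=
      hΦc.sub (P.continuous.continuousAt.comp hΦc)
    have hz : Φ x₀ - P (Φ x₀) = Φ x₀ := by rw [hPE x₀ hx₀ hxU, sub_zero]
    have e1 := hΦc.preimage_mem_nhds ht
    have e2 := hc2.preimage_mem_nhds (t := t ∩ V) (by rw [hz]; exact inter_mem ht hVx)
    filter_upwards [e1, e2, hUx, χ.eventuallyEq_one] with y h1 h2 h3 h4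
    have h4' : χ y = 1 := h4
    rw [h4', one_smul]
    refine ⟨?_, fun hy => hPE y hy h3⟩
    have h5 : Φ y - P (Φ y) ∈ V ∩ {z : En n | ∀ i : Fin n, k ≤ (i : ℕ) → z i = 0} := by
      refine ⟨h2.2, fun i hi => ?_⟩
      simp [hP, hi]
    rw [← him] at h5
    obtain ⟨e, ⟨he, heU⟩, hee⟩ := h5
    have h6 : Ψ (Φ y - P (Φ y)) = e := by rw [← hee, hl e heU]
    have h7 := hK.dist_le_mul _ h1 _ h2.1
    rw [h6, hl y h3] at h7
    have h8 : dist (Φ y) (Φ y - P (Φ y)) = ‖P (Φ y)‖ := by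
      rw [dist_eq_norm]; congr 1; abel
    rw [h8] at h7
    have := infDist_le_dist_of_mem (x := y) he
    nlinarith [norm_nonneg (P (Φ y))]

/-- Second order Taylor lower bound. -/
lemma taylor_lower {n : ℕ} {φ : En n → ℝ} {x₀ : En n} (h : ContDiffAt ℝ 2 φ x₀) {δ : ℝ}
    (hδ : 0 < δ) :
    ∀ᶠ x in 𝓝 x₀, φ x₀ + fderiv ℝ φ x₀ (x - x₀) +
      (1 / 2) * fderiv ℝ (fderiv ℝ φ) x₀ (x - x₀) (x - x₀) - δ * ‖x - x₀‖ ^ 2 ≤ φ x := by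
  set L := fderiv ℝ φ x₀
  set B := fderiv ℝ (fderiv ℝ φ) x₀ with hBdef
  have hsymm : ∀ v w, B v w = B w v := by
    have := h.isSymmSndFDerivAt (by simp)
    exact fun v w => this v w
  have hd1 : ContDiffAt ℝ 1 (fderiv ℝ φ) x₀ := h.fderiv_right (by norm_num)
  have hB : HasFDerivAt (fderiv ℝ φ) B x₀ := (hd1.differentiableAt (by norm_num)).hasFDerivAt
  have hdiff : ∀ᶠ x in 𝓝 x₀, DifferentiableAt ℝ φ x := by
    filter_upwards [h.eventually (by simp)] with x hx
    exact hx.differentiableAt (by norm_num)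
  have hlo := (hasFDerivAt_iff_isLittleO.1 hB).def hδ
  obtain ⟨r, hr, hball⟩ := Metric.eventually_nhds_iff_ball.1 (hdiff.and hlo)
  refine Metric.eventually_nhds_iff_ball.2 ⟨r, hr, fun x hx => ?_⟩
  have hsub : closedBall x₀ ‖x - x₀‖ ⊆ ball x₀ r := by
    apply closedBall_subset_ball
    rwa [← dist_eq_norm]
  have key := (convex_closedBall x₀ ‖x - x₀‖).norm_image_sub_le_of_norm_hasFDerivWithin_le
    (𝕜 := ℝ) (f := fun y => φ y - (L (y - x₀) + (1 / 2) * B (y - x₀) (y - x₀)))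
    (f' := fun y => fderiv ℝ φ y - (L + B (y - x₀))) (C := δ * ‖x - x₀‖) (x := x₀) (y := x)
    ?_ ?_ (by simp) (by simp [dist_eq_norm])
  · simp only [sub_self, map_zero, mul_zero, add_zero, sub_zero] at key
    have := abs_le.1 (Real.norm_eq_abs _ ▸ key)
    nlinarith [this.1]
  · intro y hy
    have h1 := (hball y (hsub hy)).1.hasFDerivAt
    have h0 : HasFDerivAt (fun y : En n => y - x₀) (ContinuousLinearMap.id ℝ (En n)) y :=
      (hasFDerivAt_id y).sub_const x₀
    have h2 := L.hasFDerivAt.comp y h0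
    have h3 := (B.hasFDerivAt.comp y h0).clm_apply h0
    have h4 := h1.sub (h2.add (h3.const_mul (1 / 2)))
    refine HasFDerivAt.hasFDerivWithinAt (h4.congr_fderiv ?_)
    ext v
    simp [hsymm v y, hsymm v x₀]
    ring
  · intro y hy
    have h1 := (hball y (hsub hy)).2
    have h2 : ‖y - x₀‖ ≤ ‖x - x₀‖ := by
      rw [← dist_eq_norm]; exact hy
    have h3 : fderiv ℝ φ y - (L + B (y - x₀)) = fderiv ℝ φ y - fderiv ℝ φ x₀ - B (y - x₀) := by
      abel
    rw [h3]
    exact h1.trans (mul_le_mul_of_nonneg_left h2 hδ.le)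

/-- The perturbed Taylor polynomial. -/
def tp {n : ℕ} (c : ℝ) (L : En n →L[ℝ] ℝ) (B : En n →L[ℝ] En n →L[ℝ] ℝ) (x₀ : En n) (δ K : ℝ)
    (x : En n) : ℝ :=
  c + L (x - x₀) + (1 / 2) * B (x - x₀) (x - x₀) - δ * ‖x - x₀‖ ^ 2 - K * (‖x - x₀‖ ^ 2) ^ 2

lemma tp_contDiff {n : ℕ} (c : ℝ) (L : En n →L[ℝ] ℝ) (B : En n →L[ℝ] En n →L[ℝ] ℝ) (x₀ : En n)
    (δ K : ℝ) (m : WithTop ℕ∞) : ContDiff ℝ m (tp c L B x₀ δ K) := by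
  have h0 : ContDiff ℝ m (fun x : En n => x - x₀) := contDiff_id.sub contDiff_const
  have h1 : ContDiff ℝ m (fun x : En n => ‖x - x₀‖ ^ 2) := h0.norm_sq ℝ
  have h2 : ContDiff ℝ m (fun x : En n => B (x - x₀) (x - x₀)) :=
    (B.contDiff.comp h0).clm_apply h0
  have h3 : ContDiff ℝ m (fun x : En n => L (x - x₀)) := L.contDiff.comp h0
  unfold tp
  exact (((contDiff_const.add h3).add (contDiff_const.mul h2)).sub (contDiff_const.mul h1)).sub
    (contDiff_const.mul (h1.pow 2))

lemma tp_fderiv {n : ℕ} (c : ℝ) (L : En n →L[ℝ] ℝ) (B : En n →L[ℝ] En n →L[ℝ] ℝ)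
    (hB : ∀ v w, B v w = B w v) (x₀ : En n) (δ K : ℝ) :
    fderiv ℝ (tp c L B x₀ δ K) = fun y => L + B (y - x₀) - (2 * δ) • innerSL ℝ (y - x₀)
      - (4 * K * ‖y - x₀‖ ^ 2) • innerSL ℝ (y - x₀) := by
  funext y
  have h0 : HasFDerivAt (fun y : En n => y - x₀) (ContinuousLinearMap.id ℝ (En n)) y :=
      (hasFDerivAt_id y).sub_const x₀
  have h2 := L.hasFDerivAt.comp y h0
  have h3 := (B.hasFDerivAt.comp y h0).clm_apply h0
  have h1 := h0.norm_sq
  have h4 := ((((hasFDerivAt_const c y).add h2).add (h3.const_mul (1 / 2))).sub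
    (h1.const_mul δ)).sub ((h1.pow 2).const_mul K)
  refine HasFDerivAt.fderiv (HasFDerivAt.congr_fderiv h4 ?_)
  ext v
  simp [hB v y, hB v x₀]
  ring

/-- The inner product as a bilinear continuous map. -/
def innerB (n : ℕ) : En n →L[ℝ] En n →L[ℝ] ℝ :=
  LinearMap.toContinuousLinearMap
    { toFun := fun v => innerSL ℝ v
      map_add' := by intro a b; simp
      map_smul' := by intro a b; simp }

lemma innerB_apply {n : ℕ} (v : En n) : innerB n v = innerSL ℝ v := rfl

lemma tp_fderiv2 {n : ℕ} (c : ℝ) (L : En n →L[ℝ] ℝ) (B : En n →L[ℝ] En n →L[ℝ] ℝ)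
    (hB : ∀ v w, B v w = B w v) (x₀ : En n) (δ K : ℝ) :
    fderiv ℝ (fderiv ℝ (tp c L B x₀ δ K)) x₀ = B - (2 * δ) • innerB n := by
  rw [tp_fderiv c L B hB]
  simp only [← innerB_apply]
  have h0 : HasFDerivAt (fun y : En n => y - x₀) (ContinuousLinearMap.id ℝ (En n)) x₀ :=
      (hasFDerivAt_id x₀).sub_const x₀
  have hI := (innerB n).hasFDerivAt.comp x₀ h0
  have h1 := h0.norm_sq
  have h4 := (((hasFDerivAt_const L x₀).add (B.hasFDerivAt.comp x₀ h0)).sub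
    (hI.const_smul (2 * δ))).sub ((h1.const_mul (4 * K)).smul hI)
  refine HasFDerivAt.fderiv (HasFDerivAt.congr_fderiv h4 ?_)
  ext v w
  simp

lemma hess_apply {n : ℕ} (φ : En n → ℝ) (x : En n) (i j : Fin n) : hess φ x i j =
    fderiv ℝ (fderiv ℝ φ) x (EuclideanSpace.single i 1) (EuclideanSpace.single j 1) := by
  simp [hess, iteratedFDeriv_two_apply]

/-- Main perturbation argument, for a smooth strict test function. -/
lemma main_step {n : ℕ} {Ω : Set (En n)} (hΩopen : IsOpen Ω)
    {F : En n → ℝ → En n → Matrix (Fin n) (Fin n) ℝ → ℝ}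
    (hFcont : ContinuousOn
      (fun q : En n × ℝ × En n × Matrix (Fin n) (Fin n) ℝ => F q.1 q.2.1 q.2.2.1 q.2.2.2)
      {q | q.1 ∈ Ω})
    {k : ℕ} {E : Set (En n)} (hE : IsSmoothClosedSubmanifold k E)
    {f : En n → ℝ} (hf : UpperSemicontinuousOn f Ω)
    {u : En n → ℝ} (hu : LowerSemicontinuousOn u Ω)
    (hcone : LowerConicalOn Ω u E)
    (hvisc : IsViscositySupersolution F f (Ω \ E) u)
    {x₀ : En n} (hxΩ : x₀ ∈ Ω) (hxE : x₀ ∈ E) {p : En n → ℝ}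
    (hp : ∀ m : WithTop ℕ∞, ContDiff ℝ m p) {δ : ℝ} (hδ : 0 < δ)
    (hpx : u x₀ = p x₀) (hup : ∀ x ∈ Ω, δ * ‖x - x₀‖ ^ 2 ≤ u x - p x) :
    F x₀ (p x₀) (gradient p x₀) (hess p x₀) ≤ f x₀ := by
  obtain ⟨H, C, hH, hC, hHev⟩ := exists_defining_function hE hxE
  let T : En n × ℝ → En n → ℝ := fun q y => p y + q.2 + inner ℝ q.1 (H y)
  have hT : ContDiff ℝ 2 (fun z : (En n × ℝ) × En n => T z.1 z.2) :=
    (((hp 2).comp contDiff_snd).add (contDiff_snd.comp contDiff_fst)).add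
      ((contDiff_fst.comp contDiff_fst).inner ℝ (hH.comp contDiff_snd))
  have hT1 : ContDiff ℝ 1 (fun z : (En n × ℝ) × En n => fderiv ℝ (T z.1) z.2) := by
    refine ContDiff.fderiv (m := 2) (f := fun (z : (En n × ℝ) × En n) y => T z.1 y)
      (g := fun z => z.2) ?_ contDiff_snd (by norm_num)
    exact hT.comp ((contDiff_fst.comp contDiff_fst).prodMk contDiff_snd)
  have hT2 : ContDiff ℝ 0
      (fun z : (En n × ℝ) × En n => fderiv ℝ (fderiv ℝ (T z.1)) z.2) := by
    refine ContDiff.fderiv (m := 1)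
      (f := fun (z : (En n × ℝ) × En n) y => fderiv ℝ (T z.1) y)
      (g := fun z => z.2) ?_ contDiff_snd (by norm_num)
    exact hT1.comp ((contDiff_fst.comp contDiff_fst).prodMk contDiff_snd)
  let G : (En n × ℝ) × En n → ℝ := fun z =>
    F z.2 (T z.1 z.2) (gradient (T z.1) z.2) (hess (T z.1) z.2)
  have hcurve : Continuous (fun z : (En n × ℝ) × En n =>
      ((z.2, T z.1 z.2, gradient (T z.1) z.2, hess (T z.1) z.2) :
        En n × ℝ × En n × Matrix (Fin n) (Fin n) ℝ)) := by
    refine continuous_snd.prodMk (hT.continuous.prodMk (Continuous.prodMk ?_ ?_))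
    · exact (InnerProductSpace.toDual ℝ (En n)).symm.continuous.comp hT1.continuous
    · refine continuous_matrix fun i j => ?_
      simp only [hess_apply]
      exact (hT2.continuous.clm_apply continuous_const).clm_apply continuous_const
  have hG : ContinuousAt G ((0, 0), x₀) := by
    have h1 : ContinuousAt
        (fun q : En n × ℝ × En n × Matrix (Fin n) (Fin n) ℝ => F q.1 q.2.1 q.2.2.1 q.2.2.2)
        (x₀, T (0, 0) x₀, gradient (T (0, 0)) x₀, hess (T (0, 0)) x₀) :=
      hFcont.continuousAt ((hΩopen.preimage continuous_fst).mem_nhds hxΩ)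
    exact ContinuousAt.comp (x := ((0, 0), x₀)) (f := fun z : (En n × ℝ) × En n =>
      ((z.2, T z.1 z.2, gradient (T z.1) z.2, hess (T z.1) z.2) :
        En n × ℝ × En n × Matrix (Fin n) (Fin n) ℝ)) h1 hcurve.continuousAt
  have hT0 : T (0, 0) = p := by
    funext y; simp [T]
  by_contra hcon
  push Not at hcon
  obtain ⟨t, ht1, ht2⟩ := exists_between hcon
  have hG0 : t < G ((0, 0), x₀) := by
    simp only [G, hT0]; exact ht2
  have ev1 : ∀ᶠ z in 𝓝 (((0 : En n), (0 : ℝ)), x₀), t < G z := hG.eventually (lt_mem_nhds hG0)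
  have ev2 : ∀ᶠ x in 𝓝 x₀, f x < t := by
    have := hf x₀ hxΩ t ht1
    rwa [hΩopen.nhdsWithin_eq hxΩ] at this
  obtain ⟨ρ, hρ, hGρ⟩ := Metric.eventually_nhds_iff_ball.1 ev1
  obtain ⟨r₀, hr₀, hball⟩ := Metric.eventually_nhds_iff_ball.1
    ((ev2.and hHev).and (hΩopen.mem_nhds hxΩ))
  set r := min (ρ / 2) (r₀ / 2) with hrdef
  have hr : 0 < r := lt_min (by positivity) (by positivity)
  have hrρ : r < ρ := (min_le_left _ _).trans_lt (by linarith)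
  have hrr : r < r₀ := (min_le_right _ _).trans_lt (by linarith)
  have hcb : ∀ x ∈ closedBall x₀ r, x ∈ ball x₀ r₀ := closedBall_subset_ball hrr
  have hcomp : IsCompact (closedBall x₀ r) := isCompact_closedBall _ _
  obtain ⟨M₀, hM₀⟩ := hcomp.exists_bound_of_continuousOn hH.continuous.continuousOn
  set M := max M₀ 1 with hMdef
  have hM1 : 1 ≤ M := le_max_right _ _
  have hMb : ∀ x ∈ closedBall x₀ r, ‖H x‖ ≤ M := fun x hx => (hM₀ x hx).trans (le_max_left _ _)
  obtain ⟨ε, hε, hεlt⟩ : ∃ ε : ℝ, 0 < ε ∧ ε < min (ρ / M) (min (δ * r ^ 2 / M) (C * δ * r)) :=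
    exists_between (lt_min (by positivity) (lt_min (by positivity) (by positivity)))
  have hε1 : ε * M < ρ := by
    have := hεlt.trans_le (min_le_left _ _)
    rwa [lt_div_iff₀ (by positivity)] at this
  have hε2 : ε * M < δ * r ^ 2 := by
    have := hεlt.trans_le ((min_le_right _ _).trans (min_le_left _ _))
    rwa [lt_div_iff₀ (by positivity)] at this
  have hε3 : ε < C * δ * r := hεlt.trans_le ((min_le_right _ _).trans (min_le_right _ _))
  have hε4 : ε < ρ := by nlinarith
  -- a point where the cone is violated
  obtain ⟨x₁, hx₁Ω, hx₁⟩ := hcone (fun x => - p x) (hp _).neg.contDiffOn x₀ hxE (ε / C)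
    (by positivity)
  have hx₁' : u x₁ - p x₁ < ε / C * infDist x₁ E := by linarith
  have hx₁d : infDist x₁ E ≤ ‖x₁ - x₀‖ := by
    rw [← dist_eq_norm]; exact infDist_le_dist_of_mem hxE
  have hx₁r : ‖x₁ - x₀‖ < r := by
    by_contra hge
    push Not at hge
    have h1 : δ * ‖x₁ - x₀‖ ^ 2 < ε / C * ‖x₁ - x₀‖ :=
      ((hup x₁ hx₁Ω).trans_lt hx₁').trans_le (by gcongr)
    have h2 : ε / C < δ * r := by
      rw [div_lt_iff₀ hC]; linarith
    have h3 : 0 < ‖x₁ - x₀‖ := hr.trans_le hge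
    have h4 : δ * ‖x₁ - x₀‖ < ε / C := by
      by_contra h5
      push Not at h5
      nlinarith
    nlinarith
  have hx₁b : x₁ ∈ closedBall x₀ r := by
    rw [mem_closedBall, dist_eq_norm]; exact hx₁r.le
  have hneg : u x₁ - p x₁ - ε * ‖H x₁‖ < 0 := by
    have h1 := (hball x₁ (hcb x₁ hx₁b)).1.2.1
    have h2 : ε / C * infDist x₁ E ≤ ε / C * (C * ‖H x₁‖) := by gcongr
    have h3 : ε / C * (C * ‖H x₁‖) = ε * ‖H x₁‖ := by field_simp
    linarith
  have hlsc : LowerSemicontinuousOn (fun x => u x + (- p x - ε * ‖H x‖)) (closedBall x₀ r) := by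
    refine LowerSemicontinuousOn.add (hu.mono fun x hx => (hball x (hcb x hx)).2) ?_
    exact (((hp 2).continuous.neg).sub
      (continuous_const.mul hH.continuous.norm)).continuousOn.lowerSemicontinuousOn
  obtain ⟨y, hy, hmin⟩ := hlsc.exists_isMinOn ⟨x₁, hx₁b⟩ hcomp
  have hmin' : ∀ x ∈ closedBall x₀ r, u y - p y - ε * ‖H y‖ ≤ u x - p x - ε * ‖H x‖ := by
    intro x hx
    have : u y + (- p y - ε * ‖H y‖) ≤ u x + (- p x - ε * ‖H x‖) := hmin hx
    linarith
  have hyneg : u y - p y - ε * ‖H y‖ < 0 := (hmin' x₁ hx₁b).trans_lt hneg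
  have hyΩ : y ∈ Ω := (hball y (hcb y hy)).2
  have hyup := hup y hyΩ
  have hHy : H y ≠ 0 := by
    intro h0
    rw [h0, norm_zero] at hyneg
    have : 0 ≤ δ * ‖y - x₀‖ ^ 2 := by positivity
    linarith
  have hyE : y ∉ E := fun h => hHy ((hball y (hcb y hy)).1.2.2 h)
  have hεM : ε * ‖H y‖ ≤ ε * M := mul_le_mul_of_nonneg_left (hMb y hy) hε.le
  have hyr : ‖y - x₀‖ < r := by
    by_contra hge
    push Not at hge
    have : δ * r ^ 2 ≤ δ * ‖y - x₀‖ ^ 2 := by gcongr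
    linarith
  have hnpos : 0 < ‖H y‖ := norm_pos_iff.2 hHy
  set a : En n := (ε / ‖H y‖) • H y with ha
  set c : ℝ := u y - p y - ε * ‖H y‖ with hc
  have hanorm : ‖a‖ = ε := by
    rw [ha, norm_smul, Real.norm_eq_abs, abs_of_pos (by positivity)]
    field_simp
  have haH : inner ℝ a (H y) = ε * ‖H y‖ := by
    rw [ha, real_inner_smul_left, real_inner_self_eq_norm_sq]
    field_simp
  have hcabs : |c| < ρ := by
    rw [abs_lt]
    have : 0 ≤ δ * ‖y - x₀‖ ^ 2 := by positivity
    constructor <;> linarith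
  have hzball : ((a, c), y) ∈ ball (((0 : En n), (0 : ℝ)), x₀) ρ := by
    rw [mem_ball, Prod.dist_eq, Prod.dist_eq]
    simp only [dist_zero_right, dist_eq_norm y x₀, hanorm, Real.norm_eq_abs]
    exact max_lt (max_lt hε4 hcabs) (hyr.trans hrρ)
  have hGy := hGρ _ hzball
  have hfy := (hball y (hcb y hy)).1.1
  have hTy : u y = T (a, c) y := by
    simp only [T, haH, hc]; ring
  have hTc : ContDiff ℝ 2 (T (a, c)) := hT.comp (contDiff_const.prodMk contDiff_id)
  have hfin := hvisc (T (a, c)) hTc.contDiffOn y ⟨hyΩ, hyE⟩ hTy ?_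
  · exact absurd (hGy.trans_le hfin) (by linarith)
  · have : ∀ᶠ x in 𝓝 y, x ∈ ball x₀ r :=
      isOpen_ball.mem_nhds (by rw [mem_ball, dist_eq_norm]; exact hyr)
    refine (this.filter_mono nhdsWithin_le_nhds).mono fun x hx => ?_
    have h1 := hmin' x (ball_subset_closedBall hx)
    have h2 : inner ℝ a (H x) ≤ ε * ‖H x‖ := by
      rw [← hanorm]; exact real_inner_le_norm a (H x)
    have h3 : u y - T (a, c) y = 0 := by rw [← hTy, sub_self]
    change u y - T (a, c) y ≤ u x - T (a, c) x
    rw [h3]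
    simp only [T]
    linarith

/-- **Theorem 1.3.** A viscosity supersolution of a degenerate elliptic equation outside a
smooth closed `k`-dimensional submanifold `E` of `Ω` (`0 ≤ k ≤ n-1`), which is
lowerconical on `E`, is a viscosity supersolution in all of `Ω`. -/
theorem removable_submanifold_singularity
    {n : ℕ} (hn : 1 ≤ n) (Ω : Set (En n))
    (hΩopen : IsOpen Ω) (hΩconn : IsConnected Ω) (hΩbdd : Bornology.IsBounded Ω)
    (F : En n → ℝ → En n → Matrix (Fin n) (Fin n) ℝ → ℝ)
    (hFcont : ContinuousOn
      (fun q : En n × ℝ × En n × Matrix (Fin n) (Fin n) ℝ => F q.1 q.2.1 q.2.2.1 q.2.2.2)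
      {q | q.1 ∈ Ω})
    (hFell : DegenerateElliptic Ω F)
    (k : ℕ) (hk : k ≤ n - 1)
    (E : Set (En n)) (hEΩ : E ⊆ Ω) (hE : IsSmoothClosedSubmanifold k E)
    (f : En n → ℝ) (hf : UpperSemicontinuousOn f Ω)
    (u : En n → ℝ) (hu : LowerSemicontinuousOn u Ω) (hubd : BddBelow (u '' Ω))
    (hcone : LowerConicalOn Ω u E)
    (hvisc : IsViscositySupersolution F f (Ω \ E) u) :
    IsViscositySupersolution F f Ω u := by
  intro φ hφ x₀ hx₀ hux hmin
  have hEc : IsClosed E := hE.1.isClosed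
  by_cases hxE : x₀ ∈ E
  swap
  · exact hvisc φ (hφ.mono sdiff_subset) x₀ ⟨hx₀, hxE⟩ hux
      (hmin.on_subset sdiff_subset)
  have hφx : ContDiffAt ℝ 2 φ x₀ := hφ.contDiffAt (hΩopen.mem_nhds hx₀)
  have hsymm : ∀ v w, fderiv ℝ (fderiv ℝ φ) x₀ v w = fderiv ℝ (fderiv ℝ φ) x₀ w v := by
    have := hφx.isSymmSndFDerivAt (by simp)
    exact fun v w => this v w
  set L := fderiv ℝ φ x₀ with hL
  set B := fderiv ℝ (fderiv ℝ φ) x₀ with hB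
  obtain ⟨m, hm⟩ := hubd
  have hm' : ∀ x ∈ Ω, m ≤ u x := fun x hx => hm ⟨x, hx, rfl⟩
  let J : Matrix (Fin n) (Fin n) ℝ := Matrix.of fun i j =>
    innerB n (EuclideanSpace.single i 1) (EuclideanSpace.single j 1)
  have key : ∀ δ : ℝ, 0 < δ →
      F x₀ (φ x₀) (gradient φ x₀) (hess φ x₀ - (4 * δ) • J) ≤ f x₀ := by
    intro δ hδ
    have hev := taylor_lower hφx hδ
    have hmin' : ∀ᶠ x in 𝓝 x₀, φ x ≤ u x := by
      have h1 : ∀ᶠ x in 𝓝[Ω] x₀, u x₀ - φ x₀ ≤ u x - φ x := hmin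
      rw [hΩopen.nhdsWithin_eq hx₀] at h1
      filter_upwards [h1] with x hx
      linarith
    obtain ⟨r, hr, hball⟩ := Metric.eventually_nhds_iff_ball.1 (hev.and hmin')
    have hcomp : IsCompact (closure Ω) := hΩbdd.isCompact_closure
    obtain ⟨M, hM⟩ := hcomp.bddAbove_image
      (tp_contDiff (φ x₀) L B x₀ δ 0 2).continuous.continuousOn
    have hM' : ∀ x ∈ Ω, tp (φ x₀) L B x₀ δ 0 x ≤ M :=
      fun x hx => hM ⟨x, subset_closure hx, rfl⟩
    set K := |M - m| / r ^ 4 with hK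
    have hK0 : 0 ≤ K := by positivity
    have hKr : M - m ≤ K * r ^ 4 := by
      rw [hK, div_mul_cancel₀ _ (by positivity)]; exact le_abs_self _
    have hpx : tp (φ x₀) L B x₀ (2 * δ) K x₀ = φ x₀ := by simp [tp]
    have hup : ∀ x ∈ Ω, δ * ‖x - x₀‖ ^ 2 ≤ u x - tp (φ x₀) L B x₀ (2 * δ) K x := by
      intro x hx
      have hK1 : 0 ≤ K * (‖x - x₀‖ ^ 2) ^ 2 := by positivity
      by_cases hxr : x ∈ ball x₀ r
      · obtain ⟨h1, h2⟩ := hball x hxr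
        simp only [tp]
        linarith
      · have h1 := hM' x hx
        have h2 := hm' x hx
        have h3 : r ≤ ‖x - x₀‖ := by
          rw [mem_ball, dist_eq_norm] at hxr; exact not_lt.1 hxr
        have h4 : K * r ^ 4 ≤ K * (‖x - x₀‖ ^ 2) ^ 2 := by
          rw [← pow_mul]; gcongr
        simp only [tp] at h1 ⊢
        linarith
    have := main_step hΩopen hFcont hE hf hu hcone hvisc hx₀ hxE
      (tp_contDiff (φ x₀) L B x₀ (2 * δ) K) hδ (by rw [hpx, hux]) hup
    have hg : gradient (tp (φ x₀) L B x₀ (2 * δ) K) x₀ = gradient φ x₀ := by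
      unfold gradient
      rw [tp_fderiv _ _ _ hsymm, ← hL]
      simp
    have hh : hess (tp (φ x₀) L B x₀ (2 * δ) K) x₀ = hess φ x₀ - (4 * δ) • J := by
      ext i j
      rw [hess_apply, tp_fderiv2 _ _ _ hsymm, Matrix.sub_apply, hess_apply, ← hB]
      simp only [J, Matrix.smul_apply, Matrix.of_apply, ContinuousLinearMap.sub_apply,
        ContinuousLinearMap.smul_apply, smul_eq_mul]
      ring
    rwa [hpx, hg, hh] at this
  have hcurve : Continuous (fun δ : ℝ =>
      ((x₀, φ x₀, gradient φ x₀, hess φ x₀ - (4 * δ) • J) :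
        En n × ℝ × En n × Matrix (Fin n) (Fin n) ℝ)) :=
    continuous_const.prodMk (continuous_const.prodMk (continuous_const.prodMk
      (continuous_const.sub ((continuous_const.mul continuous_id).smul continuous_const))))
  have hcont : Continuous (fun δ : ℝ =>
      F x₀ (φ x₀) (gradient φ x₀) (hess φ x₀ - (4 * δ) • J)) :=
    hFcont.comp_continuous hcurve fun _ => hx₀
  have hlim := (hcont.tendsto 0).mono_left (nhdsWithin_le_nhds (s := Ioi 0))
  have hle := le_of_tendsto hlim (eventually_mem_nhdsWithin.mono fun δ hδ => key δ hδ)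
  simpa using hle
end
end
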